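/- Let d ≥ 5. There are numbers ρ = ρ(n,d) and c = c(d) > 0 such that if A, B ⊂ Z^d are disjoint, A ∪ B has exactly n elements, dist(A, B) ≥ ρ, x is the lex element of A, and B is a disjoint union B^1 ∪ B^2 with |B^1| ≤ 3 and dist(B^1, B^2) ≥ ρ, then P_x(S_{τ_{A∪B}} ∈ B^1 | τ_{A∪B} < ∞) ≥ c·n^{−d/(d−2) − 1.6}·diam(A∪B)^{2−d}. -/

import Mathlib

open MeasureTheory

namespace HATFormal

/-- Points of the lattice `ℤ^d`. -/
abbrev Pt (d : ℕ) := Fin d → ℤ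

/-- The `2d` unit steps of the simple random walk on `ℤ^d`. -/
def Dir (d : ℕ) : Set (Pt d) :=
  {s | ∃ i : Fin d, s = Pi.single i 1 ∨ s = Pi.single i (-1)}

/-- The position, after `t` steps, of the walk started at `x` with steps `s`. -/
def wpos (d : ℕ) (x : Pt d) {T : ℕ} (s : Fin T → Pt d) (t : ℕ) : Pt d :=
  x + ∑ i ∈ Finset.univ.filter (fun i : Fin T => (i : ℕ) < t), s i

/-- The probability of an event `P` of the first `T` steps of simple random walk on `ℤ^d`. -/
noncomputable def prob (d T : ℕ) (P : (Fin T → Pt d) → Prop) : ℝ :=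
  (Nat.card {s : Fin T → Pt d // (∀ i, s i ∈ Dir d) ∧ P s} : ℝ) / ((2 * d : ℕ) : ℝ) ^ T

open Classical in
/-- `esc d A x = P_x(τ_A = ∞)` if `x ∈ A`, and `0` otherwise. -/
noncomputable def esc (d : ℕ) (A : Set (Pt d)) (x : Pt d) : ℝ :=
  if x ∈ A then ⨅ T : ℕ, prob d T (fun s => ∀ t, 1 ≤ t → t ≤ T → wpos d x s t ∉ A) else 0

/-- The capacity of `A`. -/
noncomputable def capa (d : ℕ) (A : Set (Pt d)) : ℝ := ∑' x : A, esc d A (x : Pt d)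

/-- The harmonic measure `H_A(x) = esc_A(x) / cap_A`. -/
noncomputable def harm (d : ℕ) (A : Set (Pt d)) (x : Pt d) : ℝ := esc d A x / capa d A

/-- `P_x(τ_W < ∞)`. -/
noncomputable def retProb (d : ℕ) (W : Set (Pt d)) (x : Pt d) : ℝ :=
  ∑' t : ℕ, prob d t (fun s => 1 ≤ t ∧ wpos d x s t ∈ W ∧
    ∀ u, 1 ≤ u → u < t → wpos d x s u ∉ W)

/-- `P_x(τ_W < ∞ and S_{τ_W − 1} = y)`. -/
noncomputable def hitFrom (d : ℕ) (W : Set (Pt d)) (x y : Pt d) : ℝ :=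
  ∑' t : ℕ, prob d t (fun s => 1 ≤ t ∧ wpos d x s t ∈ W ∧ wpos d x s (t - 1) = y ∧
    ∀ u, 1 ≤ u → u < t → wpos d x s u ∉ W)

/-- `P_x(τ_W < ∞ and S_{τ_W} ∈ T)`. -/
noncomputable def firstHitIn (d : ℕ) (W T : Set (Pt d)) (x : Pt d) : ℝ :=
  ∑' t : ℕ, prob d t (fun s => 1 ≤ t ∧ wpos d x s t ∈ W ∧ wpos d x s t ∈ T ∧
    ∀ u, 1 ≤ u → u < t → wpos d x s u ∉ W)

/-- `P_x(S_{τ_W − 1} = y ∣ τ_W < ∞)`. -/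
noncomputable def transP (d : ℕ) (W : Set (Pt d)) (x y : Pt d) : ℝ :=
  hitFrom d W x y / retProb d W x

/-- The Green's function of simple random walk on `ℤ^d`. -/
noncomputable def green (d : ℕ) (x : Pt d) : ℝ :=
  ∑' t : ℕ, prob d t (fun s => wpos d x s t = 0)

/-- Configurations: finite subsets of `ℤ^d`. -/
abbrev Conf (d : ℕ) := Finset (Pt d)

/-- `p_U(x, y)`, the probability that HAT activates at `x` and transports to `y`. -/
noncomputable def pHAT (d : ℕ) (U : Conf d) (x y : Pt d) : ℝ :=
  harm d (↑U) x * transP d ((↑U : Set (Pt d)) \ {x}) x y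

open Classical in
/-- The transition probabilities of HAT. -/
noncomputable def hatProb (d : ℕ) (U V : Conf d) : ℝ :=
  if V = U then ∑' z : Pt d, pHAT d U z z
  else ∑' x : Pt d, ∑' y : Pt d,
    if x ∈ U ∧ x ≠ y ∧ V = insert y (U.erase x) then pHAT d U x y else 0

instance (d : ℕ) : MeasurableSpace (Conf d) := ⊤

/-- `μ` is the law of HAT started from `U`. -/
def IsHATLaw (d : ℕ) (U : Conf d) (μ : Measure (ℕ → Conf d)) : Prop :=
  IsProbabilityMeasure μ ∧
  ∀ (t : ℕ) (u : ℕ → Conf d),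
    μ {ω | ∀ s ≤ t, ω s = u s} =
      (if u 0 = U then 1 else 0) *
        ∏ s ∈ Finset.range t, ENNReal.ofReal (hatProb d (u s) (u (s + 1)))

/-- A signed permutation plus translation of `ℤ^d`. -/
def SymImage (d : ℕ) (σ : Equiv.Perm (Fin d)) (ε : Fin d → ℤ) (v : Pt d) (x : Pt d) : Pt d :=
  fun i => v i + ε i * x (σ i)

/-- `SymEq d U V` holds when `V = gU` for a symmetry `g` of `ℤ^d`. -/
def SymEq (d : ℕ) (U V : Conf d) : Prop :=
  ∃ (σ : Equiv.Perm (Fin d)) (ε : Fin d → ℤ) (v : Pt d),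
    (∀ i, ε i = 1 ∨ ε i = -1) ∧ V = U.image (SymImage d σ ε v)

/-- Euclidean distance on `ℤ^d`. -/
noncomputable def dist0 (d : ℕ) (x y : Pt d) : ℝ :=
  Real.sqrt (∑ i, ((x i : ℝ) - (y i : ℝ)) ^ 2)

/-- Euclidean distance between finite subsets of `ℤ^d`. -/
noncomputable def setDist (d : ℕ) (A B : Finset (Pt d)) : ℝ :=
  sInf {r : ℝ | ∃ x ∈ A, ∃ y ∈ B, r = dist0 d x y}

/-- Euclidean diameter of a finite subset of `ℤ^d`. -/
noncomputable def diam0 (d : ℕ) (A : Finset (Pt d)) : ℝ :=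
  sSup {r : ℝ | ∃ x ∈ A, ∃ y ∈ A, r = dist0 d x y}

/-- Lattice (nearest-neighbor) adjacency in `ℤ^d`. -/
def latAdj (d : ℕ) (x y : Pt d) : Prop := (∑ i, (x i - y i).natAbs) = 1

/-- Exterior lattice boundary of a set. -/
def bdry (d : ℕ) (A : Set (Pt d)) : Set (Pt d) := {z | z ∉ A ∧ ∃ w ∈ A, latAdj d z w}

/-- Non-isolated configurations: some exposed element has a lattice neighbor in the set. -/
def NonIso (d : ℕ) (U : Conf d) : Prop :=
  ∃ x ∈ U, 0 < esc d (↑U) x ∧ ∃ y ∈ U, latAdj d x y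

/-- `C` is a clustering (ordered partition into nonempty clusters) of `U`. -/
def IsClusteringOf (d : ℕ) {k : ℕ} (C : Fin k → Finset (Pt d)) (U : Finset (Pt d)) : Prop :=
  (∀ i, (C i).Nonempty) ∧ (∀ i j, i ≠ j → Disjoint (C i) (C j)) ∧
    Finset.univ.biUnion C = U

/-- `C^{≠ i}`, the union of the clusters other than `i`. -/
def others (d : ℕ) {k : ℕ} (C : Fin k → Finset (Pt d)) (i : Fin k) : Finset (Pt d) :=
  Finset.univ.biUnion fun j => if j = i then ∅ else C j

/-- The separation of a clustering. -/
noncomputable def sep (d : ℕ) {k : ℕ} (C : Fin k → Finset (Pt d)) : ℝ :=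
  ⨅ i, setDist d (C i) (others d C i)

/-- `(a, b)` separated dimer-or-trimer (DOT) clusterings. -/
def IsDOT (d : ℕ) {k : ℕ} (C : Fin k → Finset (Pt d)) (a b : ℝ) : Prop :=
  (∀ i, (C i).card = 2 ∨ (C i).card = 3) ∧ a ≤ sep d C ∧
    ∀ i, diam0 d (C i) ≤ b * Real.log (setDist d (C i) (others d C i))

/-- Clusterings with an unspecified number of clusters. -/
abbrev ClusteringS (d : ℕ) := Σ k : ℕ, Fin k → Finset (Pt d)

/-- `π(C)`, the union of the clusters of `C`. -/
def confOf (d : ℕ) (C : ClusteringS d) : Conf d := Finset.univ.biUnion C.2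

/-- `C ∈ 𝒞(U, a, b)`. -/
def InC (d : ℕ) (U : Conf d) (a b : ℝ) (C : ClusteringS d) : Prop :=
  IsClusteringOf d C.2 U ∧ IsDOT d C.2 a b

/-- `U ∈ 𝒰_{d,n}(a, b)`. -/
def InU (d n : ℕ) (a b : ℝ) (U : Conf d) : Prop :=
  U.card = n ∧ ∃ C : ClusteringS d, InC d U a b C

/-- `C` is a clustering of an `n`-element configuration. -/
def IsClusteringConf (d n : ℕ) (C : ClusteringS d) : Prop :=
  (∀ i, (C.2 i).Nonempty) ∧ (∀ i j, i ≠ j → Disjoint (C.2 i) (C.2 j)) ∧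
    (confOf d C).card = n

open Classical in
/-- One step of the natural clustering. -/
noncomputable def clustStep (d : ℕ) (Ut Ut1 : Conf d) (C : ClusteringS d) : ClusteringS d :=
  if Ut1 = Ut then C
  else if h : ∃ p : Pt d × Pt d × Fin C.1,
      Ut \ Ut1 = {p.1} ∧ Ut1 \ Ut = {p.2.1} ∧ p.1 ∈ C.2 p.2.2 then
    ⟨C.1, Function.update C.2 h.choose.2.2
      (insert h.choose.2.1 ((C.2 h.choose.2.2).erase h.choose.1))⟩
  else ⟨1, fun _ => Ut1⟩

/-- The natural clustering of the trajectory `ω` with initial clustering `C0`. -/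
noncomputable def natClust (d : ℕ) (ω : ℕ → Conf d) (C0 : ClusteringS d) : ℕ → ClusteringS d
  | 0 => C0
  | t + 1 => clustStep d (ω t) (ω (t + 1)) (natClust d ω C0 t)

/-- `a_s = s^{1/2 − n^{−100}} + 100 n`. -/
noncomputable def aSep (n s : ℕ) : ℝ :=
  (s : ℝ) ^ ((1 : ℝ) / 2 - (n : ℝ) ^ (-(100 : ℝ))) + 100 * n

/-- `C^{i, x, y}`: remove `x` from cluster `i` of `C` and add `y` to that cluster. -/
def updC (d : ℕ) (C : ClusteringS d) (i : Fin C.1) (x y : Pt d) : ClusteringS d :=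
  ⟨C.1, Function.update C.2 i (insert y ((C.2 i).erase x))⟩

open Classical in
/-- The transition probabilities of the lifting of HAT to clusterings. -/
noncomputable def liftProb (d : ℕ) (E0 E1 : ClusteringS d) : ℝ :=
  ∑' x : Pt d, ∑' y : Pt d,
    if ∃ i : Fin E0.1, x ∈ E0.2 i ∧ E1 = updC d E0 i x y
    then pHAT d (confOf d E0) x y else 0

/-- The capacity of a clustering: the sum of the capacities of its clusters. -/
noncomputable def capS (d : ℕ) (C : ClusteringS d) : ℝ := ∑ i, capa d (↑(C.2 i))

/-- `H_C(i, x) = esc_{C^i}(x) / cap_C`. -/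
noncomputable def harmS (d : ℕ) (C : ClusteringS d) (i : Fin C.1) (x : Pt d) : ℝ :=
  esc d (↑(C.2 i)) x / capS d C

/-- `q_C(i, x, y)`. -/
noncomputable def qIHAT (d : ℕ) (C : ClusteringS d) (i : Fin C.1) (x y : Pt d) : ℝ :=
  harmS d C i x * transP d ((↑(C.2 i) : Set (Pt d)) \ {x}) x y

open Classical in
/-- The transition probabilities of intracluster HAT (IHAT). -/
noncomputable def ihatProb (d : ℕ) (D E : ClusteringS d) : ℝ :=
  ∑' x : Pt d, ∑' y : Pt d, ∑ i : Fin D.1,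
    if x ∈ D.2 i ∧ E = updC d D i x y then qIHAT d D i x y else 0

instance (d : ℕ) : MeasurableSpace (ClusteringS d) := ⊤

open Classical in
/-- `μ` is the law of the lifted HAT chain started from `E0`. -/
def IsLiftLaw (d : ℕ) (E0 : ClusteringS d) (μ : Measure (ℕ → ClusteringS d)) : Prop :=
  IsProbabilityMeasure μ ∧
  ∀ (t : ℕ) (u : ℕ → ClusteringS d),
    μ {ω | ∀ s ≤ t, ω s = u s} =
      (if u 0 = E0 then 1 else 0) *
        ∏ s ∈ Finset.range t, ENNReal.ofReal (liftProb d (u s) (u (s + 1)))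

open Classical in
/-- `μ` is the law of intracluster HAT started from `D0`. -/
def IsIHATLaw (d : ℕ) (D0 : ClusteringS d) (μ : Measure (ℕ → ClusteringS d)) : Prop :=
  IsProbabilityMeasure μ ∧
  ∀ (t : ℕ) (u : ℕ → ClusteringS d),
    μ {ω | ∀ s ≤ t, ω s = u s} =
      (if u 0 = D0 then 1 else 0) *
        ∏ s ∈ Finset.range t, ENNReal.ofReal (ihatProb d (u s) (u (s + 1)))

/-- `Pairs(E0, E1)`. -/
def Pairs (d : ℕ) (E0 E1 : ClusteringS d) : Set (Pt d × Pt d) :=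
  {p | 0 < pHAT d (confOf d E0) p.1 p.2 ∧
    ∃ i : Fin E0.1, p.1 ∈ E0.2 i ∧ E1 = updC d E0 i p.1 p.2}

/-- `Triples(E0, E1)`. -/
def Triples (d : ℕ) (E0 E1 : ClusteringS d) : Set (Fin E0.1 × Pt d × Pt d) :=
  {q | 0 < qIHAT d E0 q.1 q.2.1 q.2.2 ∧ E1 = updC d E0 q.1 q.2.1 q.2.2}

/-- The first standard basis vector of `ℤ^d`. -/
def e1v (d : ℕ) : Pt d := fun i => if (i : ℕ) = 0 then 1 else 0

/-- Reference dimers and trimers. -/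
def Ref (d : ℕ) : Set (Finset (Pt d)) :=
  {A | ∃ x : Pt d, A = {x, x + e1v d} ∨ A = {x, x + e1v d, x + e1v d + e1v d}}

/-- *-adjacency in `ℤ^d`: distinct points differing by at most one in each coordinate. -/
def starAdj (d : ℕ) (x y : Pt d) : Prop := x ≠ y ∧ ∀ i, (x i - y i).natAbs ≤ 1

/-- The *-visible boundary of `A`. -/
def visBdry (d : ℕ) (A : Finset (Pt d)) : Set (Pt d) :=
  {x | (∃ y ∈ A, starAdj d x y) ∧
    ∃ γ : ℕ → Pt d, γ 0 = x ∧ (∀ t, latAdj d (γ t) (γ (t + 1))) ∧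
      (∀ t, γ t ∉ A) ∧ ∀ r : ℝ, ∃ t, r < dist0 d (γ t) 0}

/-- `A` is connected in the nearest-neighbor graph of `ℤ^d`. -/
def LatConnected (d : ℕ) (A : Finset (Pt d)) : Prop :=
  ∀ x ∈ A, ∀ y ∈ A, ∃ (L : ℕ) (γ : ℕ → Pt d), γ 0 = x ∧ γ L = y ∧
    (∀ t < L, latAdj d (γ t) (γ (t + 1))) ∧ ∀ t ≤ L, γ t ∈ A

/-- Strict lexicographic order on `ℤ^d`. -/
def lexLt (d : ℕ) (x y : Pt d) : Prop :=
  ∃ i : Fin d, (∀ j, j < i → x j = y j) ∧ x i < y i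

/-- `x` is the lex (least) element of `A`. -/
def IsLex (d : ℕ) (A : Finset (Pt d)) (x : Pt d) : Prop :=
  x ∈ A ∧ ∀ y ∈ A, y ≠ x → lexLt d x y

/-!
Write `U z` for the probability that the walk from `z` first enters `W = A ∪ B` through `B¹`. Every
estimate on `U` comes from the discrete maximum principle, applied to an explicit barrier.

Regularised Newtonian kernels `(‖z‖² ± c)^{(2-d)/2}` are super- and subharmonic, so the probability
of ever hitting a point at distance `r` is comparable to `r^{2-d}`. Fix `b ∈ B¹`. Points of `W`
outside `B¹` are so far from `b` that passing through them costs little of the chance to hit `b`,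
so `U ≳ diam(W)^{2-d}` at distance about `2 diam(W)` from `x`. Inside that sphere, at distance
`h ≍ n^{1/(d-2)}` from `W`, the walk reaches the sphere before `W` with probability at least `1/2`,
and `U` loses only this factor. Such points lie at depth `h` below `x`, on the side of `x`
free of `A` because `x` is lex. A harmonic quadratic polynomial on the slab between depths `0` and
`h` brings the bound from depth `h` up to the neighbour `x - e₀` at the cost of a factor `h`, and
the walk steps from `x` to that neighbour with probability `1 / (2d)`.
-/

section RandomWalkGenerator

variable {d : ℕ} {F G : Pt d → ℝ} {z : Pt d} {c : ℝ}

/-- The steps `±eᵢ` of simple random walk, indexed by axis and sign. -/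
def unitStep (k : Fin d × ℤˣ) : Pt d := Pi.single k.1 (k.2 : ℤ)

theorem unitStep_injective : Function.Injective (unitStep (d := d)) := by
  rintro ⟨i, a⟩ ⟨j, b⟩ h
  have hi := congrFun h i
  by_cases hij : i = j
  · subst hij
    simpa [unitStep, Units.val_inj] using hi
  · simp [unitStep, hij] at hi

theorem range_unitStep : Set.range (unitStep (d := d)) = Dir d := by
  ext s
  constructor
  · rintro ⟨⟨i, ε⟩, rfl⟩
    rcases Int.units_eq_one_or ε with rfl | rfl
    · exact ⟨i, Or.inl rfl⟩
    · exact ⟨i, Or.inr rfl⟩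
  · rintro ⟨i, rfl | rfl⟩
    · exact ⟨(i, 1), rfl⟩
    · exact ⟨(i, -1), rfl⟩

theorem forall_of_forall_add_unitStep {p : Pt d → Prop} (hz : p z)
    (hstep : ∀ y k, p y → p (y + unitStep k)) (w : Pt d) : p w := by
  have single : ∀ (i : Fin d) (n : ℤ) (y : Pt d), p y → p (y + Pi.single i n) := by
    intro i n
    induction n using Int.induction_on with
    | zero => simp
    | succ n ih =>
      intro y hy
      simpa [unitStep, Pi.single_add, add_assoc] using hstep _ (i, 1) (ih y hy)
    | pred n ih =>
      intro y hy
      simpa [unitStep, Pi.single_add, Pi.single_neg, sub_eq_add_neg, add_assoc]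
        using hstep _ (i, -1) (ih y hy)
  have sum : ∀ s : Finset (Fin d), p (z + ∑ i ∈ s, Pi.single i ((w - z) i)) := by
    intro s
    induction s using Finset.induction_on with
    | empty => simpa using hz
    | insert i s hi ih =>
      simpa [Finset.sum_insert hi, add_left_comm, add_comm] using single i _ _ ih
  have := sum Finset.univ
  rwa [Finset.univ_sum_single, add_sub_cancel] at this

/-- The transition operator of simple random walk. A function `F` is superharmonic at `z` when
`stepAvg F z ≤ F z`, and harmonic there when equality holds. -/
noncomputable def stepAvg : (Pt d → ℝ) →ₗ[ℝ] (Pt d → ℝ) where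
  toFun F z := (∑ k, F (z + unitStep k)) / (2 * d)
  map_add' F G := by ext z; simp [Finset.sum_add_distrib, add_div]
  map_smul' c F := by ext z; simp [← Finset.mul_sum, mul_div_assoc]

theorem stepAvg_apply (F : Pt d → ℝ) (z : Pt d) :
    stepAvg F z = (∑ k, F (z + unitStep k)) / (2 * d) := rfl

theorem stepAvg_mono_at (h : ∀ k, F (z + unitStep k) ≤ G (z + unitStep k)) :
    stepAvg F z ≤ stepAvg G z := by
  rw [stepAvg_apply, stepAvg_apply]
  gcongr with k
  exact h k

theorem stepAvg_mono (h : F ≤ G) : stepAvg F z ≤ stepAvg G z :=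
  stepAvg_mono_at fun _ => h _

theorem stepAvg_const [NeZero d] (c : ℝ) (z : Pt d) : stepAvg (fun _ => c) z = c := by
  have : (d : ℝ) ≠ 0 := Nat.cast_ne_zero.2 (NeZero.ne d)
  rw [stepAvg_apply]
  simp only [Finset.sum_const, Finset.card_univ, Fintype.card_prod, Fintype.card_fin,
    Fintype.card_units_int, nsmul_eq_mul, Nat.cast_mul, Nat.cast_ofNat]
  field_simp

theorem stepAvg_comp_sub (F : Pt d → ℝ) (w z : Pt d) :
    stepAvg (fun y => F (y - w)) z = stepAvg F (z - w) := by
  simp only [stepAvg_apply, add_sub_right_comm]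

theorem div_le_stepAvg (hF : 0 ≤ F) (k : Fin d × ℤˣ) :
    F (z + unitStep k) / (2 * d) ≤ stepAvg F z := by
  rw [stepAvg_apply]
  gcongr
  exact Finset.single_le_sum (f := fun k => F (z + unitStep k)) (fun _ _ => hF _)
    (Finset.mem_univ k)

theorem eq_of_le_stepAvg [NeZero d] (hF : ∀ k, F (z + unitStep k) ≤ c) (hc : c ≤ stepAvg F z)
    (k : Fin d × ℤˣ) : F (z + unitStep k) = c := by
  have hd : (0 : ℝ) < 2 * d := by
    have := NeZero.pos d
    positivity
  have sum_le : ∑ k, F (z + unitStep k) ≤ ∑ _k : Fin d × ℤˣ, c :=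
    Finset.sum_le_sum fun k _ => hF k
  have sum_ge : ∑ _k : Fin d × ℤˣ, c ≤ ∑ k, F (z + unitStep k) := by
    rw [← stepAvg_const c z, stepAvg_apply, stepAvg_apply] at hc
    exact (div_le_div_iff_of_pos_right hd).1 hc
  exact (Finset.sum_eq_sum_iff_of_le fun k _ => hF k).1 (sum_le.antisymm sum_ge) k
    (Finset.mem_univ k)

theorem eq_const_of_le_stepAvg [NeZero d] (hF : ∀ y, F y ≤ c)
    (hsub : ∀ y, F y = c → c ≤ stepAvg F y) (hz : F z = c) (w : Pt d) : F w = c :=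
  forall_of_forall_add_unitStep (p := fun w => F w = c) hz
    (fun y k hy => eq_of_le_stepAvg (fun _ => hF _) (hsub y hy) k) w

theorem maximum_principle [NeZero d] {K : Pt d → ℝ} {V : Set (Pt d)}
    (hdecay : ∀ ε > 0, ∀ᶠ y in Filter.cofinite, y ∈ V → K y < ε)
    (hsub : ∀ y ∈ V, K y ≤ stepAvg K y)
    (hbdry : ∀ y ∈ V, ∀ k, y + unitStep k ∉ V → K (y + unitStep k) ≤ 0) (hz : z ∈ V) :
    K z ≤ 0 := by
  by_contra! hKz
  set F := V.indicator K
  have F_of_mem : ∀ y ∈ V, F y = K y := fun y hy => Set.indicator_of_mem hy K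
  have F_of_notMem : ∀ y ∉ V, F y = 0 := fun y hy => Set.indicator_of_notMem hy K
  have mem_of_pos : ∀ y, 0 < F y → y ∈ V := fun y hy => Set.mem_of_indicator_ne_zero hy.ne'
  have large_finite : {y | K z ≤ F y}.Finite := by
    refine (Filter.eventually_cofinite.1 (hdecay _ hKz)).subset fun y (hy : K z ≤ F y) => ?_
    have hyV := mem_of_pos y (hKz.trans_le hy)
    simpa [hyV, F_of_mem y hyV] using hy
  obtain ⟨m, hm, hmax⟩ := large_finite.exists_maximalFor F _ ⟨z, (F_of_mem z hz).ge⟩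
  have F_le : ∀ y, F y ≤ F m := fun y => by
    by_contra! h
    exact h.not_ge (hmax (le_trans hm h.le) h.le)
  have m_pos : 0 < F m := hKz.trans_le hm
  have F_eq : ∀ y, F y = F m := by
    refine eq_const_of_le_stepAvg F_le (fun y hy => ?_) rfl
    have hyV := mem_of_pos y (hy.symm ▸ m_pos)
    rw [← hy, F_of_mem y hyV]
    refine (hsub y hyV).trans (stepAvg_mono_at fun k => ?_)
    by_cases hk : y + unitStep k ∈ V
    · exact (F_of_mem _ hk).ge
    · exact (F_of_notMem _ hk).symm ▸ hbdry y hyV k hk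
  exact Set.infinite_univ (large_finite.subset fun y _ => (hm : K z ≤ F m).trans (F_eq y).ge)

end RandomWalkGenerator

section HittingProbability

variable {d T : ℕ} {P : (Fin T → Pt d) → Prop} {W U : Set (Pt d)} {G : Pt d → ℝ} {z : Pt d}

theorem wpos_zero (x : Pt d) (s : Fin T → Pt d) : wpos d x s 0 = x := by
  simp [wpos]

theorem wpos_cons (x v : Pt d) (s : Fin T → Pt d) (t : ℕ) :
    wpos d x (Fin.cons v s : Fin (T + 1) → Pt d) (t + 1) = wpos d (x + v) s t := by
  simp [wpos, Finset.sum_filter, Fin.sum_univ_succ, add_assoc]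

theorem finite_steps (T : ℕ) (P : (Fin T → Pt d) → Prop) :
    Finite {s : Fin T → Pt d // (∀ i, s i ∈ Dir d) ∧ P s} := by
  have : (Dir d).Finite := range_unitStep (d := d) ▸ Set.finite_range unitStep
  exact ((Set.Finite.pi' fun _ => this).subset fun s hs => hs.1).to_subtype

theorem prob_nonneg (P : (Fin T → Pt d) → Prop) : 0 ≤ prob d T P := by
  unfold prob
  positivity

theorem prob_eq_zero (h : ∀ s, ¬ P s) : prob d T P = 0 := by
  simp [prob, h]

theorem prob_zero_eq_one {P : (Fin 0 → Pt d) → Prop} (h : ∀ s, P s) : prob d 0 P = 1 := by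
  simp [prob, h]

theorem prob_succ (P : (Fin (T + 1) → Pt d) → Prop) :
    prob d (T + 1) P =
      (∑ k, prob d T fun s => P (Fin.cons (unitStep k) s)) / (2 * d) := by
  let cons : (Σ k : Fin d × ℤˣ,
      {s : Fin T → Pt d // (∀ i, s i ∈ Dir d) ∧ P (Fin.cons (unitStep k) s)}) →
      {s : Fin (T + 1) → Pt d // (∀ i, s i ∈ Dir d) ∧ P s} := fun p =>
    ⟨Fin.cons (unitStep p.1) p.2.1, Fin.cases (range_unitStep.subset ⟨p.1, rfl⟩) p.2.2.1, p.2.2.2⟩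
  have bijective : Function.Bijective cons := by
    constructor
    · rintro ⟨k, s, hs⟩ ⟨l, t, ht⟩ h
      obtain ⟨hk, rfl⟩ := Fin.cons_injective2 (α := fun _ => Pt d) (congrArg Subtype.val h)
      obtain rfl := unitStep_injective hk
      rfl
    · rintro ⟨s, hs, hP⟩
      obtain ⟨k, hk⟩ := range_unitStep.superset (hs 0)
      have hcons : Fin.cons (unitStep k) (Fin.tail s) = s := by rw [hk, Fin.cons_self_tail]
      exact ⟨⟨k, Fin.tail s, fun i => hs i.succ, hcons.symm ▸ hP⟩, Subtype.ext hcons⟩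
  have (k : Fin d × ℤˣ) := finite_steps T fun s => P (Fin.cons (unitStep k) s)
  simp only [prob, ← Nat.card_congr (Equiv.ofBijective cons bijective), Nat.card_sigma,
    Nat.cast_sum, Finset.sum_div, pow_succ, div_div, Nat.cast_mul, Nat.cast_ofNat]

/-- The probability that the walk from `z` enters `W` (time `0` included) at time `t`, through a
point of `U`. -/
noncomputable def firstHit (W U : Set (Pt d)) (t : ℕ) (z : Pt d) : ℝ :=
  prob d t fun s => wpos d z s t ∈ W ∧ wpos d z s t ∈ U ∧ ∀ u < t, wpos d z s u ∉ W

/-- The probability that the walk from `z` ever enters `W` (time `0` included) and first does so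
through a point of `U`. -/
noncomputable def hitProb (W U : Set (Pt d)) (z : Pt d) : ℝ :=
  ∑' t, firstHit W U t z

/-- The probability that the walk from `x` returns to `W` (time `0` excluded) at time `t`, through a
point of `U`; these are the terms of `firstHitIn`. -/
noncomputable def returnHit (W U : Set (Pt d)) (t : ℕ) (x : Pt d) : ℝ :=
  prob d t fun s => 1 ≤ t ∧ wpos d x s t ∈ W ∧ wpos d x s t ∈ U ∧
    ∀ u, 1 ≤ u → u < t → wpos d x s u ∉ W

theorem firstHit_nonneg (W U : Set (Pt d)) (t : ℕ) (z : Pt d) : 0 ≤ firstHit W U t z :=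
  prob_nonneg _

theorem hitProb_nonneg (W U : Set (Pt d)) (z : Pt d) : 0 ≤ hitProb W U z :=
  tsum_nonneg fun t => firstHit_nonneg W U t z

theorem firstHit_zero_of_mem (hW : z ∈ W) (hU : z ∈ U) : firstHit W U 0 z = 1 :=
  prob_zero_eq_one fun s => by simp [wpos_zero, hW, hU]

theorem firstHit_zero_of_notMem (hz : z ∉ W ∩ U) : firstHit W U 0 z = 0 :=
  prob_eq_zero fun s hs => hz (by simpa [wpos_zero] using hs)

theorem firstHit_succ_of_mem (hW : z ∈ W) (t : ℕ) : firstHit W U (t + 1) z = 0 :=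
  prob_eq_zero fun s hs => hs.2.2 0 t.succ_pos ((wpos_zero z s).symm ▸ hW)

theorem returnHit_zero (W U : Set (Pt d)) (x : Pt d) : returnHit W U 0 x = 0 :=
  prob_eq_zero fun _ hs => Nat.not_succ_le_zero 0 hs.1

theorem returnHit_succ (W U : Set (Pt d)) (t : ℕ) (x : Pt d) :
    returnHit W U (t + 1) x = stepAvg (firstHit W U t) x := by
  have shift (p : ℕ → Prop) : (∀ u, 1 ≤ u → u < t + 1 → p u) ↔ ∀ u < t, p (u + 1) :=
    ⟨fun h u hu => h _ u.succ_pos (Nat.succ_lt_succ hu), fun h u hu hut => by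
      obtain ⟨u, rfl⟩ := Nat.exists_eq_add_of_le' hu
      exact h u (Nat.lt_of_succ_lt_succ hut)⟩
  simp only [returnHit, prob_succ, stepAvg_apply, firstHit, shift, wpos_cons, Nat.le_add_left,
    true_and]

theorem firstHit_succ_of_notMem (hz : z ∉ W) (t : ℕ) :
    firstHit W U (t + 1) z = stepAvg (firstHit W U t) z := by
  have from_one (s : Fin (t + 1) → Pt d) : (∀ u < t + 1, wpos d z s u ∉ W) ↔
      ∀ u, 1 ≤ u → u < t + 1 → wpos d z s u ∉ W :=
    ⟨fun h u _ => h u, fun h u hu => u.eq_zero_or_pos.elim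
      (fun h0 => by rwa [h0, wpos_zero]) (fun hpos => h u hpos hu)⟩
  simp only [← returnHit_succ, returnHit, firstHit, from_one, Nat.le_add_left, true_and]

theorem sum_range_firstHit_le (hG : 0 ≤ G) (hG_one : ∀ y ∈ W ∩ U, 1 ≤ G y)
    (hG_super : ∀ y ∉ W, stepAvg G y ≤ G y) (N : ℕ) (z : Pt d) :
    ∑ t ∈ Finset.range N, firstHit W U t z ≤ G z := by
  induction N generalizing z with
  | zero => simpa using hG z
  | succ N ih =>
    rw [Finset.sum_range_succ']
    by_cases hW : z ∈ W
    · simp only [firstHit_succ_of_mem hW, Finset.sum_const_zero, zero_add]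
      by_cases hU : z ∈ U
      · exact (firstHit_zero_of_mem hW hU).trans_le (hG_one z ⟨hW, hU⟩)
      · exact (firstHit_zero_of_notMem fun h => hU h.2).trans_le (hG z)
    · rw [firstHit_zero_of_notMem fun h => hW h.1, add_zero]
      calc ∑ t ∈ Finset.range N, firstHit W U (t + 1) z
          = stepAvg (∑ t ∈ Finset.range N, firstHit W U t) z := by
            simp [firstHit_succ_of_notMem hW]
        _ ≤ stepAvg G z := stepAvg_mono fun y => by simpa using ih y
        _ ≤ G z := hG_super z hW

theorem hitProb_le (hG : 0 ≤ G) (hG_one : ∀ y ∈ W ∩ U, 1 ≤ G y)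
    (hG_super : ∀ y ∉ W, stepAvg G y ≤ G y) (z : Pt d) : hitProb W U z ≤ G z :=
  Real.tsum_le_of_sum_range_le (fun t => firstHit_nonneg W U t z)
    (fun N => sum_range_firstHit_le hG hG_one hG_super N z)

variable [NeZero d]

theorem summable_firstHit (W U : Set (Pt d)) (z : Pt d) :
    Summable fun t => firstHit W U t z :=
  summable_of_sum_range_le (fun t => firstHit_nonneg W U t z) fun N =>
    sum_range_firstHit_le (G := fun _ => 1) (fun _ => zero_le_one) (fun _ _ => le_rfl)
      (fun y _ => (stepAvg_const 1 y).le) N z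

theorem hitProb_le_one (W U : Set (Pt d)) (z : Pt d) : hitProb W U z ≤ 1 :=
  hitProb_le (fun _ => zero_le_one) (fun _ _ => le_rfl) (fun y _ => (stepAvg_const 1 y).le) z

theorem hitProb_of_mem (hW : z ∈ W) (hU : z ∈ U) : hitProb W U z = 1 := by
  simp [hitProb, (summable_firstHit W U z).tsum_eq_zero_add, firstHit_succ_of_mem hW,
    firstHit_zero_of_mem hW hU]

theorem tsum_stepAvg_firstHit (W U : Set (Pt d)) (z : Pt d) :
    ∑' t, stepAvg (firstHit W U t) z = stepAvg (hitProb W U) z := by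
  simp only [stepAvg_apply, hitProb, tsum_div_const]
  rw [Summable.tsum_finsetSum fun k _ => summable_firstHit W U _]

theorem stepAvg_hitProb_of_notMem (U : Set (Pt d)) (hz : z ∉ W) :
    stepAvg (hitProb W U) z = hitProb W U z := by
  rw [← tsum_stepAvg_firstHit, hitProb, (summable_firstHit W U z).tsum_eq_zero_add,
    firstHit_zero_of_notMem fun h => hz h.1, zero_add]
  simp only [firstHit_succ_of_notMem hz]

theorem firstHitIn_eq_stepAvg (W U : Set (Pt d)) (x : Pt d) :
    firstHitIn d W U x = stepAvg (hitProb W U) x := by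
  have summable : Summable fun t => returnHit W U (t + 1) x := by
    simp only [returnHit_succ, stepAvg_apply]
    exact (summable_sum fun k _ => summable_firstHit W U _).div_const _
  calc firstHitIn d W U x = ∑' t, returnHit W U t x := rfl
    _ = ∑' t, returnHit W U (t + 1) x := by
      rw [tsum_eq_zero_add' (f := fun t => returnHit W U t x) summable, returnHit_zero, zero_add]
    _ = stepAvg (hitProb W U) x := by simp only [returnHit_succ, tsum_stepAvg_firstHit]

theorem firstHitIn_le_div_retProb (W U : Set (Pt d)) (x : Pt d) :
    firstHitIn d W U x ≤ firstHitIn d W U x / retProb d W x := by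
  have retProb_eq : retProb d W x = stepAvg (hitProb W Set.univ) x := by
    simp [← firstHitIn_eq_stepAvg, retProb, firstHitIn]
  have retProb_le_one : retProb d W x ≤ 1 :=
    retProb_eq ▸ (stepAvg_mono (hitProb_le_one W _)).trans_eq (stepAvg_const 1 x)
  have hitProb_le_univ : hitProb W U ≤ hitProb W Set.univ :=
    hitProb_le (hitProb_nonneg W _) (fun y hy => (hitProb_of_mem hy.1 (Set.mem_univ y)).ge)
      fun y hy => (stepAvg_hitProb_of_notMem _ hy).le
  have firstHitIn_le : firstHitIn d W U x ≤ retProb d W x :=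
    retProb_eq ▸ firstHitIn_eq_stepAvg W U x ▸ stepAvg_mono hitProb_le_univ
  have firstHitIn_nonneg : 0 ≤ firstHitIn d W U x := tsum_nonneg fun t => prob_nonneg _
  rcases (firstHitIn_nonneg.trans firstHitIn_le).eq_or_lt with h | h
  · simpa [← h] using firstHitIn_le
  · exact le_div_self firstHitIn_nonneg h retProb_le_one

end HittingProbability

section Euclidean

open Filter

variable {d : ℕ}

/-- The inclusion of `ℤ^d` into Euclidean space, so that `‖euc z‖` is the Euclidean norm of `z`
(the norm of `Pt d` itself being the sup norm). -/
def euc : Pt d →+ EuclideanSpace ℝ (Fin d) where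
  toFun z := WithLp.toLp 2 fun i => (z i : ℝ)
  map_zero' := by ext i; simp
  map_add' z w := by ext i; simp

@[simp]
theorem euc_apply (z : Pt d) (i : Fin d) : euc z i = z i := rfl

theorem norm_euc_sq (z : Pt d) : ‖euc z‖ ^ 2 = ∑ i, (z i : ℝ) ^ 2 := by
  simp [EuclideanSpace.norm_sq_eq]

theorem dist0_eq_norm_euc (x y : Pt d) : dist0 d x y = ‖euc (x - y)‖ := by
  simp [dist0, EuclideanSpace.norm_eq]

theorem abs_coord_le_norm_euc (z : Pt d) (i : Fin d) : |(z i : ℝ)| ≤ ‖euc z‖ := by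
  simpa using PiLp.norm_apply_le (euc z) i

theorem norm_euc_sub_rev (x y : Pt d) : ‖euc (x - y)‖ = ‖euc (y - x)‖ := by
  rw [← neg_sub, map_neg, norm_neg]

theorem norm_euc_sub_le (x y z : Pt d) : ‖euc (x - z)‖ ≤ ‖euc (x - y)‖ + ‖euc (y - z)‖ := by
  simpa only [map_sub] using norm_sub_le_norm_sub_add_norm_sub (euc x) (euc y) (euc z)

theorem norm_euc_unitStep (k : Fin d × ℤˣ) : ‖euc (unitStep k)‖ = 1 := by
  have : euc (unitStep k) = EuclideanSpace.single k.1 ((k.2 : ℤ) : ℝ) := by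
    ext j
    by_cases h : j = k.1 <;> simp [unitStep, h]
  rcases Int.units_eq_one_or k.2 with h | h <;> simp [this, h]

theorem norm_euc_add_unitStep_sq (z : Pt d) (k : Fin d × ℤˣ) :
    ‖euc (z + unitStep k)‖ ^ 2 = ‖euc z‖ ^ 2 + 2 * ((k.2 : ℤ) * z k.1) + 1 := by
  have inner_eq : inner ℝ (euc z) (euc (unitStep k)) = ((k.2 : ℤ) * z k.1 : ℝ) := by
    simp [PiLp.inner_apply, unitStep, Pi.single_apply]
  rw [map_add, norm_add_sq_real, norm_euc_unitStep, inner_eq, one_pow]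

theorem one_le_norm_euc {z : Pt d} (hz : z ≠ 0) : 1 ≤ ‖euc z‖ := by
  obtain ⟨i, hi⟩ := Function.ne_iff.1 hz
  have : (1 : ℝ) ≤ |(z i : ℝ)| := by exact_mod_cast Int.one_le_abs hi
  exact this.trans (abs_coord_le_norm_euc z i)

theorem tendsto_norm_euc_cofinite (d : ℕ) :
    Tendsto (fun z : Pt d => ‖euc z‖) cofinite atTop := by
  have norm_le (z : Pt d) : ‖z‖ ≤ ‖euc z‖ :=
    (pi_norm_le_iff_of_nonneg (norm_nonneg _)).2 fun i => abs_coord_le_norm_euc z i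
  exact tendsto_atTop_mono norm_le (cocompact_eq_cofinite (Pt d) ▸ tendsto_norm_cocompact_atTop)

theorem setDist_le {A B : Finset (Pt d)} {x y : Pt d} (hx : x ∈ A) (hy : y ∈ B) :
    setDist d A B ≤ ‖euc (x - y)‖ := by
  rw [← dist0_eq_norm_euc]
  exact csInf_le ⟨0, by rintro _ ⟨_, _, _, _, rfl⟩; exact Real.sqrt_nonneg _⟩ ⟨x, hx, y, hy, rfl⟩

theorem nonempty_of_setDist_pos {A B : Finset (Pt d)} (h : 0 < setDist d A B) : A.Nonempty := by
  by_contra! hA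
  simp [setDist, hA] at h

theorem norm_euc_sub_le_diam0 {A : Finset (Pt d)} {x y : Pt d} (hx : x ∈ A) (hy : y ∈ A) :
    ‖euc (x - y)‖ ≤ diam0 d A := by
  rw [← dist0_eq_norm_euc]
  have finite : {r : ℝ | ∃ x ∈ A, ∃ y ∈ A, r = dist0 d x y}.Finite :=
    ((A ×ˢ A).finite_toSet.image fun p => dist0 d p.1 p.2).subset <| by
      rintro _ ⟨x, hx, y, hy, rfl⟩
      exact ⟨(x, y), by simp [hx, hy], rfl⟩
  exact le_csSup finite.bddAbove ⟨x, hx, y, hy, rfl⟩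

end Euclidean

section Taylor

theorem exists_abs_one_add_rpow_sub_sum_choose_le (s : ℝ) (N : ℕ) :
    ∃ C, 0 ≤ C ∧ ∀ y : ℝ, |y| ≤ 1 / 2 →
      |(1 + y) ^ s - ∑ n ∈ Finset.range N, Ring.choose s n * y ^ n| ≤ C * |y| ^ N := by
  obtain ⟨a, ⟨ha, ha'⟩, C, hC, h⟩ :=
    (Real.one_add_rpow_hasFPowerSeriesOnBall_zero (a := s)).uniform_geometric_approx'
      (r' := 3 / 4) (ENNReal.coe_lt_one_iff.2 (by norm_num [← NNReal.coe_lt_coe]))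
  refine ⟨C * (a * (4 / 3)) ^ N, by positivity, fun y hy => ?_⟩
  have hy_mem : y ∈ Metric.ball (0 : ℝ) ((3 / 4 : NNReal) : ℝ) := by
    simp only [Metric.mem_ball, dist_zero_right, Real.norm_eq_abs]
    push_cast
    linarith
  calc _ ≤ C * (a * (|y| / (3 / 4))) ^ N := by
        simpa [binomialSeries, FormalMultilinearSeries.partialSum,
          FormalMultilinearSeries.ofScalars_apply_eq, mul_comm] using h y hy_mem N
    _ = C * (a * (4 / 3)) ^ N * |y| ^ N := by ring

theorem choose_two_eq (s : ℝ) : Ring.choose s 2 = s * (s - 1) / 2 := by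
  have := Ring.descPochhammer_eq_factorial_smul_choose s 2
  simp only [descPochhammer_succ_right, descPochhammer_zero, CharP.cast_eq_zero, sub_zero, one_mul,
    Nat.cast_one, Polynomial.smeval_mul, Polynomial.smeval_X, pow_one, Polynomial.smeval_sub,
    Polynomial.smeval_one, pow_zero, one_smul, Nat.factorial_two, nsmul_eq_mul,
    Nat.cast_ofNat] at this
  linarith

theorem exists_one_sub_rpow_neg_le (q : ℝ) :
    ∃ C, 0 ≤ C ∧ ∀ t : ℝ, |t| ≤ 1 / 2 → (1 - t) ^ (-q) ≤ 1 + q * t + C * t ^ 2 := by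
  obtain ⟨C, hC, h⟩ := exists_abs_one_add_rpow_sub_sum_choose_le (-q) 2
  refine ⟨C, hC, fun t ht => ?_⟩
  have := (abs_le.1 (h (-t) (by rwa [abs_neg]))).2
  simp only [Finset.sum_range_succ, Finset.sum_range_zero, Ring.choose_zero_right,
    Ring.choose_one_right, abs_neg, sq_abs, ← sub_eq_add_neg] at this
  linarith

theorem exists_abs_one_add_rpow_add_one_sub_rpow_sub_le (s : ℝ) :
    ∃ C, 0 ≤ C ∧ ∀ y : ℝ, |y| ≤ 1 / 2 →
      |(1 + y) ^ s + (1 - y) ^ s - (2 + s * (s - 1) * y ^ 2)| ≤ C * y ^ 4 := by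
  obtain ⟨C, hC, h⟩ := exists_abs_one_add_rpow_sub_sum_choose_le s 4
  refine ⟨2 * C, by positivity, fun y hy => ?_⟩
  have sum_range_four (y : ℝ) : ∑ n ∈ Finset.range 4, Ring.choose s n * y ^ n =
      1 + s * y + s * (s - 1) / 2 * y ^ 2 + Ring.choose s 3 * y ^ 3 := by
    simp [Finset.sum_range_succ, choose_two_eq]
  have pos := h y hy
  have neg := h (-y) (by rwa [abs_neg])
  rw [sum_range_four, abs_neg, Even.pow_abs (by decide), ← sub_eq_add_neg] at neg
  rw [sum_range_four, Even.pow_abs (by decide)] at pos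
  rw [two_mul, add_mul]
  refine le_of_eq_of_le ?_ ((abs_add_le _ _).trans (add_le_add pos neg))
  congr 1
  ring

theorem one_add_mul_le_one_sub_rpow_neg {q t : ℝ} (hq : 0 ≤ q) (ht : t < 1) :
    1 + q * t ≤ (1 - t) ^ (-q) := by
  have : 0 < 1 - t := sub_pos.2 ht
  calc 1 + q * t ≤ Real.exp (q * t) := by linarith [Real.add_one_le_exp (q * t)]
    _ ≤ (1 - t) ^ (-q) := by
      rw [Real.rpow_def_of_pos this, Real.exp_le_exp]
      nlinarith [Real.log_le_sub_one_of_pos this]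

end Taylor

section NewtonKernel

open Filter Topology

variable {d : ℕ}

/-- The regularised Newtonian kernel `(‖z‖² + c)^{-(d-2)/2}`: superharmonic for large `c`, and
subharmonic away from the origin for very negative `c`. -/
noncomputable def newton (c : ℝ) (z : Pt d) : ℝ :=
  (‖euc z‖ ^ 2 + c) ^ (-(((d : ℝ) - 2) / 2))

theorem newton_zero_eq_rpow (z : Pt d) : newton 0 z = ‖euc z‖ ^ (2 - d : ℝ) := by
  rw [newton, add_zero, ← Real.rpow_natCast_mul (norm_nonneg _)]
  congr 1
  push_cast
  ring

theorem newton_anti {c c' : ℝ} {z : Pt d} (hd : 2 ≤ d) (hc : 0 < ‖euc z‖ ^ 2 + c)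
    (hcc' : c ≤ c') : newton c' z ≤ newton c z := by
  have : (2 : ℝ) ≤ d := mod_cast hd
  exact Real.rpow_le_rpow_of_nonpos hc (by linarith) (by linarith)

theorem tendsto_newton_cofinite (hd : 3 ≤ d) (c : ℝ) :
    Tendsto (newton (d := d) c) cofinite (𝓝 0) := by
  have : (3 : ℝ) ≤ d := mod_cast hd
  exact (tendsto_rpow_neg_atTop (by linarith)).comp <| tendsto_atTop_add_const_right _ c <|
    (tendsto_pow_atTop two_ne_zero).comp (tendsto_norm_euc_cofinite d)

theorem stepAvg_newton {c Q : ℝ} {z : Pt d} (hQ : 0 < Q) (hQ_eq : ‖euc z‖ ^ 2 + 1 + c = Q)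
    (hz : 2 * ‖euc z‖ ≤ Q) :
    stepAvg (newton c) z = Q ^ (-(((d : ℝ) - 2) / 2)) *
      ((∑ i, ((1 + 2 * z i / Q) ^ (-(((d : ℝ) - 2) / 2)) +
        (1 - 2 * z i / Q) ^ (-(((d : ℝ) - 2) / 2)))) / (2 * d)) := by
  have newton_add_step (k : Fin d × ℤˣ) : newton c (z + unitStep k) =
      Q ^ (-(((d : ℝ) - 2) / 2)) * (1 + (k.2 : ℤ) * (2 * z k.1 / Q)) ^ (-(((d : ℝ) - 2) / 2)) := by
    have abs_le_one : |2 * z k.1 / Q| ≤ 1 := by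
      rw [abs_div, abs_mul, abs_two, abs_of_pos hQ, div_le_one hQ]
      linarith [abs_coord_le_norm_euc z k.1]
    have factor_nonneg : 0 ≤ 1 + (k.2 : ℤ) * (2 * z k.1 / Q) := by
      rcases Int.units_eq_one_or k.2 with h | h <;>
        simp only [h, Units.val_one, Units.val_neg, Int.cast_one, Int.cast_neg] <;>
        linarith [abs_le.1 abs_le_one]
    rw [← Real.mul_rpow hQ.le factor_nonneg, newton, norm_euc_add_unitStep_sq]
    congr 1
    field_simp
    linarith
  simp [stepAvg_apply, newton_add_step, ← Finset.mul_sum, Fintype.sum_prod_type, UnitsInt.univ,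
    mul_div_assoc, ← sub_eq_add_neg]

theorem exists_abs_stepAvg_newton_sub_le (d : ℕ) [NeZero d] :
    ∃ C, 0 ≤ C ∧ ∀ (c Q : ℝ) (z : Pt d), 0 < Q → ‖euc z‖ ^ 2 + 1 + c = Q → 4 * ‖euc z‖ ≤ Q →
      |stepAvg (newton c) z -
        Q ^ (-(((d : ℝ) - 2) / 2)) * (1 + ((d : ℝ) - 2) / 2 * ‖euc z‖ ^ 2 / Q ^ 2)| ≤
      Q ^ (-(((d : ℝ) - 2) / 2)) * (C * (‖euc z‖ ^ 2 / Q ^ 2) ^ 2) := by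
  set p : ℝ := ((d : ℝ) - 2) / 2 with hp
  have hd : (d : ℝ) = 2 * (p + 1) := by rw [hp]; ring
  have d_pos : (0 : ℝ) < d := Nat.cast_pos.2 (NeZero.pos d)
  obtain ⟨C, hC, taylor⟩ := exists_abs_one_add_rpow_add_one_sub_rpow_sub_le (-p)
  refine ⟨8 * C / d, by positivity, fun c Q z hQ hQ_eq hz => ?_⟩
  have sum_sq : ∑ i, (2 * z i / Q) ^ 2 = 4 * ‖euc z‖ ^ 2 / Q ^ 2 := by
    simp only [norm_euc_sq, Finset.mul_sum, Finset.sum_div, div_pow, mul_pow]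
    norm_num
  have sum_pow_four_le : ∑ i, (2 * z i / Q) ^ 4 ≤ (4 * ‖euc z‖ ^ 2 / Q ^ 2) ^ 2 := by
    simp only [← sum_sq, show 4 = 2 * 2 from rfl, pow_mul]
    exact Finset.sum_sq_le_sq_sum_of_nonneg fun i _ => sq_nonneg _
  have sum_main : ∑ i, (2 + -p * (-p - 1) * (2 * z i / Q) ^ 2) =
      2 * d * (1 + p * ‖euc z‖ ^ 2 / Q ^ 2) := by
    rw [Finset.sum_add_distrib, ← Finset.mul_sum, sum_sq, Finset.sum_const, Finset.card_univ,
      Fintype.card_fin, nsmul_eq_mul, hd]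
    ring
  have sum_error : |∑ i, ((1 + 2 * z i / Q) ^ (-p) + (1 - 2 * z i / Q) ^ (-p)) -
      2 * d * (1 + p * ‖euc z‖ ^ 2 / Q ^ 2)| ≤ C * (4 * ‖euc z‖ ^ 2 / Q ^ 2) ^ 2 := by
    rw [← sum_main, ← Finset.sum_sub_distrib]
    refine (Finset.abs_sum_le_sum_abs _ _).trans
      ((Finset.sum_le_sum fun i _ => taylor _ ?_).trans ?_)
    · rw [abs_div, abs_mul, abs_two, abs_of_pos hQ, div_le_iff₀ hQ]
      linarith [abs_coord_le_norm_euc z i]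
    · rw [← Finset.mul_sum]
      gcongr
  rw [stepAvg_newton hQ hQ_eq (by linarith [norm_nonneg (euc z)]), ← mul_sub, abs_mul,
    abs_of_pos (by positivity : 0 < Q ^ (-p))]
  gcongr
  rw [div_sub' (by positivity), abs_div, abs_of_pos (by positivity : (0 : ℝ) < 2 * d),
    div_le_iff₀ (by positivity)]
  refine sum_error.trans_eq ?_
  field_simp
  ring

theorem newton_eq_mul {c Q : ℝ} {z : Pt d} (hQ : 1 ≤ Q) (hQ_eq : ‖euc z‖ ^ 2 + 1 + c = Q) :
    newton c z = Q ^ (-(((d : ℝ) - 2) / 2)) * (1 - 1 / Q) ^ (-(((d : ℝ) - 2) / 2)) := by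
  have Q_pos : 0 < Q := by linarith
  rw [newton, ← Real.mul_rpow Q_pos.le (sub_nonneg.2 ((div_le_one Q_pos).2 hQ))]
  congr 1
  field_simp
  linarith

theorem exists_newton_superharmonic (hd : 3 ≤ d) :
    ∃ a : ℝ, 0 < a ∧ ∀ z : Pt d, stepAvg (newton a) z ≤ newton a z := by
  have : NeZero d := ⟨by lia⟩
  have p_pos : 0 < ((d : ℝ) - 2) / 2 := by
    have : (3 : ℝ) ≤ d := mod_cast hd
    linarith
  obtain ⟨C, hC, approx⟩ := exists_abs_stepAvg_newton_sub_le d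
  set p : ℝ := ((d : ℝ) - 2) / 2
  set a := 3 + C / p with ha
  have a_ge : 3 ≤ a := by
    have : 0 ≤ C / p := by positivity
    linarith
  refine ⟨a, by linarith, fun z => ?_⟩
  set r := ‖euc z‖ ^ 2
  set Q := r + 1 + a
  have r_nonneg : 0 ≤ r := sq_nonneg _
  have Q_pos : 0 < Q := by linarith
  have stepAvg_le := (abs_le.1 (approx a Q z Q_pos rfl
    (by nlinarith [sq_nonneg (‖euc z‖ - 2)]))).2
  have bernoulli : 1 + p * (1 / Q) ≤ (1 - 1 / Q) ^ (-p) :=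
    one_add_mul_le_one_sub_rpow_neg p_pos.le ((div_lt_one Q_pos).2 (by linarith))
  have error_le : (r / Q ^ 2) ^ 2 ≤ 1 / Q ^ 2 := by
    calc (r / Q ^ 2) ^ 2 = (r / Q) ^ 2 / Q ^ 2 := by field_simp
      _ ≤ 1 / Q ^ 2 := by
        gcongr
        exact pow_le_one₀ (by positivity) ((div_le_one Q_pos).2 (by linarith))
  have gain_eq : p * (1 / Q) = p * r / Q ^ 2 + (4 * p + C) * (1 / Q ^ 2) := by
    have : p * a = 3 * p + C := by rw [ha]; field_simp
    field_simp
    linear_combination this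
  calc stepAvg (newton a) z ≤ Q ^ (-p) * (1 + p * r / Q ^ 2 + C * (r / Q ^ 2) ^ 2) := by linarith
    _ ≤ Q ^ (-p) * (1 + p * (1 / Q)) := by
      have : 0 ≤ 4 * p * (1 / Q ^ 2) := by positivity
      refine mul_le_mul_of_nonneg_left ?_ (by positivity)
      linarith [mul_le_mul_of_nonneg_left error_le hC]
    _ ≤ Q ^ (-p) * (1 - 1 / Q) ^ (-p) := by gcongr
    _ = newton a z := (newton_eq_mul (by linarith) rfl).symm

theorem exists_newton_subharmonic (hd : 3 ≤ d) :
    ∃ b R : ℝ, 0 ≤ b ∧ b < R ∧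
      ∀ z : Pt d, R ≤ ‖euc z‖ ^ 2 → newton (-b) z ≤ stepAvg (newton (-b)) z := by
  have : NeZero d := ⟨by lia⟩
  have p_pos : 0 < ((d : ℝ) - 2) / 2 := by
    have : (3 : ℝ) ≤ d := mod_cast hd
    linarith
  obtain ⟨C, hC, approx⟩ := exists_abs_stepAvg_newton_sub_le d
  set p : ℝ := ((d : ℝ) - 2) / 2
  obtain ⟨C', hC', taylor⟩ := exists_one_sub_rpow_neg_le p
  set b := 1 + (4 * C + C') / p with hb
  have b_ge : 1 ≤ b := by
    have : 0 ≤ (4 * C + C') / p := by positivity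
    linarith
  refine ⟨b, 2 * b + 16, by linarith, by linarith, fun z hz => ?_⟩
  set r := ‖euc z‖ ^ 2
  set Q := r + 1 + -b
  have Q_ge : 2 ≤ Q := by linarith
  have Q_pos : 0 < Q := by linarith
  have stepAvg_ge := (abs_le.1 (approx (-b) Q z Q_pos rfl
    (by nlinarith [sq_nonneg (‖euc z‖ - 4)]))).1
  have taylor_le : (1 - 1 / Q) ^ (-p) ≤ 1 + p * (1 / Q) + C' * (1 / Q) ^ 2 := by
    refine taylor (1 / Q) ?_
    rw [abs_of_pos (by positivity)]
    gcongr
  have error_le : (r / Q ^ 2) ^ 2 ≤ 4 * (1 / Q ^ 2) := by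
    calc (r / Q ^ 2) ^ 2 = (r / Q) ^ 2 * (1 / Q ^ 2) := by field_simp
      _ ≤ 2 ^ 2 * (1 / Q ^ 2) := by
        gcongr
        exact (div_le_iff₀ Q_pos).2 (by linarith)
      _ = 4 * (1 / Q ^ 2) := by norm_num
  have gain_eq : p * (1 / Q) + C' * (1 / Q) ^ 2 = p * r / Q ^ 2 - C * (4 * (1 / Q ^ 2)) := by
    have : p * b = p + 4 * C + C' := by rw [hb]; field_simp; ring
    field_simp
    linear_combination -this
  calc newton (-b) z = Q ^ (-p) * (1 - 1 / Q) ^ (-p) := newton_eq_mul (by linarith) rfl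
    _ ≤ Q ^ (-p) * (1 + p * r / Q ^ 2 - C * (r / Q ^ 2) ^ 2) := by
      gcongr
      linarith [mul_le_mul_of_nonneg_left error_le hC]
    _ ≤ stepAvg (newton (-b)) z := by linarith

end NewtonKernel

section OriginHit

open Filter Topology

variable {d : ℕ} {z : Pt d}

theorem eventually_mul_le_of_finite {ι : Type*} {s : Set ι} (hs : s.Finite) (f : ι → ℝ) {g : ι → ℝ}
    (hg : ∀ i ∈ s, 0 < g i) : ∀ᶠ k in 𝓝[>] (0 : ℝ), ∀ i ∈ s, k * f i ≤ g i := by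
  refine (eventually_all_finite hs).2 fun i hi => nhdsWithin_le_nhds ?_
  have : Tendsto (fun k => k * f i) (𝓝 0) (𝓝 0) := by
    simpa using (continuous_mul_const (f i)).tendsto 0
  exact (this.eventually_lt_const (hg i hi)).mono fun _ => le_of_lt

/-- The probability that the walk from `z` ever visits the origin. For transient walks this is the
Green's function normalised to be `1` at the origin. -/
noncomputable def originHit : Pt d → ℝ := hitProb {0} Set.univ

theorem originHit_nonneg (z : Pt d) : 0 ≤ originHit z := hitProb_nonneg _ _ z

/-- The expected number of points of `S` visited by the walk from `z`. -/
noncomputable def meanHits (S : Finset (Pt d)) : Pt d → ℝ :=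
  ∑ w ∈ S, fun z => originHit (z - w)

theorem meanHits_nonneg (S : Finset (Pt d)) : 0 ≤ meanHits S :=
  Finset.sum_nonneg fun _ _ _ => originHit_nonneg _

theorem meanHits_le_card_mul {S : Finset (Pt d)} {m : ℝ}
    (h : ∀ w ∈ S, originHit (z - w) ≤ m) : meanHits S z ≤ S.card * m := by
  rw [meanHits, Finset.sum_apply, ← nsmul_eq_mul]
  exact Finset.sum_le_card_nsmul _ _ _ h

theorem exists_originHit_le (hd : 3 ≤ d) :
    ∃ C : ℝ, 0 < C ∧ ∀ (z : Pt d) (δ : ℝ), 0 < δ → δ ≤ ‖euc z‖ →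
      originHit z ≤ C * δ ^ (2 - d : ℝ) := by
  obtain ⟨a, ha, newton_super⟩ := exists_newton_superharmonic hd
  have newton_zero_pos : 0 < newton a (0 : Pt d) := Real.rpow_pos_of_pos (by positivity) _
  have originHit_le (z : Pt d) : originHit z ≤ ((newton a (0 : Pt d))⁻¹ • newton a) z := by
    refine hitProb_le (fun y => ?_) (fun y hy => ?_) (fun y _ => ?_) z
    · exact mul_nonneg (inv_nonneg.2 newton_zero_pos.le) (Real.rpow_nonneg (by positivity) _)
    · obtain rfl : y = 0 := hy.1
      exact (inv_mul_cancel₀ newton_zero_pos.ne').ge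
    · rw [map_smul]
      exact mul_le_mul_of_nonneg_left (newton_super y) (inv_nonneg.2 newton_zero_pos.le)
  refine ⟨(newton a (0 : Pt d))⁻¹, inv_pos.2 newton_zero_pos, fun z δ hδ hz => ?_⟩
  have z_pos : 0 < ‖euc z‖ := hδ.trans_le hz
  calc originHit z ≤ (newton a (0 : Pt d))⁻¹ * newton a z := originHit_le z
    _ ≤ (newton a (0 : Pt d))⁻¹ * ‖euc z‖ ^ (2 - d : ℝ) := by
      rw [← newton_zero_eq_rpow]
      gcongr
      exact newton_anti (by lia) (by positivity) ha.le
    _ ≤ (newton a (0 : Pt d))⁻¹ * δ ^ (2 - d : ℝ) := by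
      have : (3 : ℝ) ≤ d := mod_cast hd
      exact mul_le_mul_of_nonneg_left (Real.rpow_le_rpow_of_nonpos hδ hz (by linarith))
        (inv_nonneg.2 newton_zero_pos.le)

theorem tendsto_originHit_cofinite (hd : 3 ≤ d) :
    Tendsto (originHit (d := d)) cofinite (𝓝 0) := by
  obtain ⟨C, -, originHit_le⟩ := exists_originHit_le hd
  have majorant := (tendsto_newton_cofinite hd 0).const_mul C
  rw [mul_zero] at majorant
  refine squeeze_zero' (.of_forall originHit_nonneg) ?_ majorant
  filter_upwards [(Set.finite_singleton (0 : Pt d)).compl_mem_cofinite] with z hz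
  rw [newton_zero_eq_rpow]
  exact originHit_le z _ (zero_lt_one.trans_le (one_le_norm_euc hz)) le_rfl

variable [NeZero d]

theorem originHit_le_one (z : Pt d) : originHit z ≤ 1 := hitProb_le_one _ _ z

theorem originHit_zero : originHit (0 : Pt d) = 1 :=
  hitProb_of_mem (Set.mem_singleton 0) (Set.mem_univ 0)

theorem stepAvg_originHit (hz : z ≠ 0) : stepAvg originHit z = originHit z :=
  stepAvg_hitProb_of_notMem _ hz

theorem stepAvg_originHit_le (z : Pt d) : stepAvg originHit z ≤ originHit z := by
  rcases eq_or_ne z 0 with rfl | hz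
  · exact (stepAvg_mono originHit_le_one).trans_eq
      ((stepAvg_const 1 0).trans (originHit_zero (d := d)).symm)
  · exact (stepAvg_originHit hz).le

theorem originHit_pos (z : Pt d) : 0 < originHit z := by
  refine (originHit_nonneg z).lt_of_ne fun hz => ?_
  have neg_originHit_eq := eq_const_of_le_stepAvg (F := -originHit) (z := z) (c := 0)
    (fun y => neg_nonpos.2 (originHit_nonneg y))
    (fun y hy => by
      rw [map_neg, ← hy]
      exact neg_le_neg (stepAvg_originHit_le y))
    (by simp [← hz]) 0
  simp [originHit_zero] at neg_originHit_eq

theorem exists_le_originHit (hd : 3 ≤ d) :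
    ∃ c : ℝ, 0 < c ∧ ∀ (z : Pt d) (δ : ℝ), z ≠ 0 → ‖euc z‖ ≤ δ →
      c * δ ^ (2 - d : ℝ) ≤ originHit z := by
  obtain ⟨b, R, hb, hbR, newton_sub⟩ := exists_newton_subharmonic hd
  have finite_ball : {z : Pt d | ¬ R ≤ ‖euc z‖ ^ 2}.Finite := eventually_cofinite.1 <|
    ((tendsto_pow_atTop two_ne_zero).comp (tendsto_norm_euc_cofinite d)).eventually_ge_atTop R
  have near (c : ℝ) := eventually_mul_le_of_finite finite_ball (newton c)
    fun z _ => originHit_pos z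
  obtain ⟨k, ⟨near_zero, near_neg⟩, hk : 0 < k⟩ :=
    (((near 0).and (near (-b))).and self_mem_nhdsWithin).exists
  refine ⟨k, hk, fun z δ hz hδ => ?_⟩
  have rpow_le : k * δ ^ (2 - d : ℝ) ≤ k * newton 0 z := by
    have : (3 : ℝ) ≤ d := mod_cast hd
    rw [newton_zero_eq_rpow]
    exact mul_le_mul_of_nonneg_left (Real.rpow_le_rpow_of_nonpos
      (zero_lt_one.trans_le (one_le_norm_euc hz)) hδ (by linarith)) hk.le
  refine rpow_le.trans ?_
  by_cases hzR : R ≤ ‖euc z‖ ^ 2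
  · have far : (k • newton (-b) - originHit : Pt d → ℝ) z ≤ 0 := by
      refine maximum_principle (K := k • newton (-b) - originHit) (V := {z | R ≤ ‖euc z‖ ^ 2})
        (fun ε hε => ?_) (fun y hy => ?_) (fun y _ l hl => sub_nonpos.2 (near_neg _ hl)) hzR
      · have decay := ((tendsto_newton_cofinite hd (-b)).const_mul k).sub
          (tendsto_originHit_cofinite hd)
        rw [mul_zero, sub_zero] at decay
        exact (decay.eventually_lt_const hε).mono fun y hy _ => hy
      · rw [map_sub, map_smul]
        exact sub_le_sub (mul_le_mul_of_nonneg_left (newton_sub y hy) hk.le)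
          (stepAvg_originHit_le y)
    calc k * newton 0 z ≤ k * newton (-b) z := by
          gcongr
          exact newton_anti (by lia) (by linarith) (by linarith)
      _ ≤ originHit z := sub_nonpos.1 far
  · exact near_zero z hzR

theorem one_le_meanHits {S : Finset (Pt d)} (hz : z ∈ S) : 1 ≤ meanHits S z := by
  rw [meanHits, Finset.sum_apply]
  calc (1 : ℝ) = originHit (z - z) := by rw [sub_self, originHit_zero]
    _ ≤ ∑ w ∈ S, originHit (z - w) :=
      Finset.single_le_sum (f := fun w => originHit (z - w)) (fun _ _ => originHit_nonneg _) hz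

theorem stepAvg_meanHits_le (S : Finset (Pt d)) : stepAvg (meanHits S) ≤ meanHits S := by
  rw [meanHits, map_sum]
  refine Finset.sum_le_sum fun w _ z => ?_
  rw [stepAvg_comp_sub]
  exact stepAvg_originHit_le _

end OriginHit

section Comparison

open Filter

variable {d : ℕ} [NeZero d] {W T : Finset (Pt d)} {x z : Pt d}

theorem originHit_sub_le_hitProb (hd : 3 ≤ d) {b : Pt d} {m : ℝ} (hb : b ∈ W) (hm : 0 ≤ m)
    (h : ∀ w ∈ W \ T, originHit (w - b) ≤ m) (z : Pt d) :
    originHit (z - b) - m * meanHits (W \ T) z ≤ hitProb W T z := by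
  set K : Pt d → ℝ :=
    (fun y => originHit (y - b)) - m • meanHits (W \ T) - hitProb (W : Set (Pt d)) T
  have hK (y : Pt d) : K y = originHit (y - b) - m * meanHits (W \ T) y - hitProb W T y := rfl
  have mul_meanHits_nonneg (y : Pt d) : 0 ≤ m * meanHits (W \ T) y :=
    mul_nonneg hm (meanHits_nonneg _ y)
  have on_W : ∀ y ∈ W, K y ≤ 0 := fun y hy => by
    by_cases hT : y ∈ T
    · linarith [hK y, originHit_le_one (y - b), mul_meanHits_nonneg y,
        hitProb_of_mem (Finset.mem_coe.2 hy) (Finset.mem_coe.2 hT)]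
    · have hyWT := Finset.mem_sdiff.2 ⟨hy, hT⟩
      linarith [hK y, h y hyWT, le_mul_of_one_le_right hm (one_le_meanHits hyWT),
        hitProb_nonneg (W : Set (Pt d)) T y]
  suffices K z ≤ 0 from sub_nonpos.1 this
  by_cases hz : z ∈ W
  · exact on_W z hz
  refine maximum_principle (V := {y | y ∉ W}) (fun ε hε => ?_) (fun y hy => ?_)
    (fun y _ k hk => on_W _ (not_not.1 hk)) hz
  · have decay := (tendsto_originHit_cofinite hd).comp
      (sub_left_injective (b := b)).tendsto_cofinite
    filter_upwards [decay.eventually_lt_const hε] with y hy _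
    have hy : originHit (y - b) < ε := hy
    linarith [hK y, mul_meanHits_nonneg y, hitProb_nonneg (W : Set (Pt d)) T y]
  · have hyb : y - b ≠ 0 := sub_ne_zero.2 fun h => hy (h ▸ hb)
    rw [hK, map_sub, map_sub, map_smul, Pi.sub_apply, Pi.sub_apply, Pi.smul_apply,
      stepAvg_hitProb_of_notMem _ (Finset.mem_coe.not.2 hy), stepAvg_comp_sub,
      stepAvg_originHit hyb, smul_eq_mul]
    gcongr
    exact stepAvg_meanHits_le _ y

theorem mul_one_sub_meanHits_le_hitProb {η r : ℝ} (hη : 0 ≤ η)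
    (h : ∀ y, r ≤ ‖euc (y - x)‖ → ‖euc (y - x)‖ ≤ r + 1 → η ≤ hitProb W T y)
    (hz : ‖euc (z - x)‖ < r) : η * (1 - meanHits W z) ≤ hitProb W T z := by
  set K : Pt d → ℝ := η • ((fun _ => 1) - meanHits W) - hitProb (W : Set (Pt d)) T
  have hK (y : Pt d) : K y = η * (1 - meanHits W y) - hitProb W T y := rfl
  have on_W : ∀ y ∈ W, K y ≤ 0 := fun y hy => by
    have : η * (1 - meanHits W y) ≤ 0 :=
      mul_nonpos_of_nonneg_of_nonpos hη (sub_nonpos.2 (one_le_meanHits hy))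
    linarith [hK y, hitProb_nonneg (W : Set (Pt d)) T y]
  suffices K z ≤ 0 from sub_nonpos.1 this
  by_cases hzW : z ∈ W
  · exact on_W z hzW
  refine maximum_principle (V := {y | ‖euc (y - x)‖ < r ∧ y ∉ W}) (fun ε _ => ?_)
    (fun y hy => ?_) (fun y hy k hk => ?_) ⟨hz, hzW⟩
  · have escape := (tendsto_norm_euc_cofinite d).comp
      (sub_left_injective (b := x)).tendsto_cofinite
    filter_upwards [escape.eventually_ge_atTop r] with y hy hyV
    exact absurd hyV.1 (not_lt.2 hy)
  · rw [hK, map_sub, map_smul, map_sub, Pi.sub_apply, Pi.smul_apply, Pi.sub_apply,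
      stepAvg_hitProb_of_notMem _ (Finset.mem_coe.not.2 hy.2), stepAvg_const, smul_eq_mul]
    gcongr
    exact stepAvg_meanHits_le _ y
  · by_cases hkW : y + unitStep k ∈ W
    · exact on_W _ hkW
    have norm_ge : r ≤ ‖euc (y + unitStep k - x)‖ := not_lt.1 fun h => hk ⟨h, hkW⟩
    have norm_le : ‖euc (y + unitStep k - x)‖ ≤ r + 1 := by
      rw [add_sub_right_comm, map_add]
      exact (norm_add_le _ _).trans (add_le_add hy.1.le (norm_euc_unitStep k).le)
    have : η * (1 - meanHits W (y + unitStep k)) ≤ η :=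
      mul_le_of_le_one_right hη (sub_le_self 1 (meanHits_nonneg W _))
    linarith [hK (y + unitStep k), h _ norm_ge norm_le]

end Comparison

section SlabBarrier

variable {d : ℕ} {i : Fin d} {h : ℕ} {u x z : Pt d} {W T : Finset (Pt d)}

/-- A harmonic quadratic polynomial which, on the slab `-h ≤ u i ≤ 0`, is at most `(d + 1) h`,
is nonpositive on the face `u i = 0`, and is positive only within the ball of radius
`(d + 1) h`. -/
noncomputable def slabBarrier (i : Fin d) (h : ℕ) (u : Pt d) : ℝ :=
  (h : ℝ)⁻¹ * (d * (u i : ℝ) ^ 2 - ‖euc u‖ ^ 2) - u i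

theorem coord_sq_le_of_mem_slab (hu : -(h : ℤ) ≤ u i) (hu' : u i ≤ 0) :
    (u i : ℝ) ^ 2 ≤ h ^ 2 := by
  exact_mod_cast sq_le_sq' hu (hu'.trans h.cast_nonneg)

theorem slabBarrier_le (hh : 0 < h) (hu : -(h : ℤ) ≤ u i) (hu' : u i ≤ 0) :
    slabBarrier i h u ≤ (d + 1) * h := by
  have neg_coord_le : -(u i : ℝ) ≤ h := by exact_mod_cast neg_le.1 hu
  have quadratic_le : d * (u i : ℝ) ^ 2 - ‖euc u‖ ^ 2 ≤ d * h ^ 2 :=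
    (sub_le_self _ (sq_nonneg _)).trans
      (mul_le_mul_of_nonneg_left (coord_sq_le_of_mem_slab hu hu') d.cast_nonneg)
  calc slabBarrier i h u ≤ (h : ℝ)⁻¹ * (d * h ^ 2) + h :=
        add_le_add (mul_le_mul_of_nonneg_left quadratic_le (by positivity)) neg_coord_le
    _ = (d + 1) * h := by field_simp

theorem norm_euc_le_of_slabBarrier_pos (hh : 0 < h) (hu : -(h : ℤ) ≤ u i) (hu' : u i ≤ 0)
    (hpos : 0 < slabBarrier i h u) : ‖euc u‖ ≤ (d + 1) * h := by
  have hh' : (0 : ℝ) < h := Nat.cast_pos.2 hh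
  have neg_coord_le : -(u i : ℝ) ≤ h := by exact_mod_cast neg_le.1 hu
  have mul_pos : 0 < h * slabBarrier i h u := mul_pos hh' hpos
  rw [slabBarrier, mul_sub, mul_inv_cancel_left₀ hh'.ne'] at mul_pos
  refine (sq_le_sq₀ (norm_nonneg _) (by positivity)).1 ?_
  calc ‖euc u‖ ^ 2 ≤ d * (u i : ℝ) ^ 2 + h * -(u i : ℝ) := by linarith
    _ ≤ d * (h : ℝ) ^ 2 + h * h := by
      gcongr d * ?_ + h * ?_
      exact coord_sq_le_of_mem_slab hu hu'
    _ ≤ ((d + 1) * h : ℝ) ^ 2 := by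
      have : (0 : ℝ) ≤ (d ^ 2 + d) * h ^ 2 := by positivity
      linarith

theorem slabBarrier_nonpos_of_coord_eq_zero (hu : u i = 0) : slabBarrier i h u ≤ 0 := by
  have : 0 ≤ (h : ℝ)⁻¹ * ‖euc u‖ ^ 2 := by positivity
  simpa [slabBarrier, hu] using this

theorem abs_unitStep_apply_le_one (k : Fin d × ℤˣ) (i : Fin d) : |unitStep k i| ≤ 1 := by
  rcases eq_or_ne i k.1 with rfl | h
  · rcases Int.units_eq_one_or k.2 with hk | hk <;> simp [unitStep, hk]
  · simp [unitStep, h]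

variable [NeZero d]

theorem stepAvg_coord (i : Fin d) (z : Pt d) : stepAvg (fun y => (y i : ℝ)) z = z i := by
  have d_ne : (d : ℝ) ≠ 0 := Nat.cast_ne_zero.2 (NeZero.ne d)
  have sum_sign (j : Fin d) :
      ((z + unitStep (j, 1)) i : ℝ) + ((z + unitStep (j, -1)) i : ℝ) = 2 * z i := by
    simp only [unitStep, Units.val_one, Units.val_neg, Pi.single_neg, Pi.add_apply, Pi.neg_apply,
      Int.cast_add, Int.cast_neg]
    ring
  rw [stepAvg_apply, div_eq_iff (by positivity)]
  simp only [Fintype.sum_prod_type, UnitsInt.univ, Finset.sum_pair (show (1 : ℤˣ) ≠ -1 by decide),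
    sum_sign, Finset.sum_const, Finset.card_univ, Fintype.card_fin, nsmul_eq_mul]
  ring

theorem stepAvg_coord_sq (i : Fin d) (z : Pt d) :
    stepAvg (fun y => (y i : ℝ) ^ 2) z = z i ^ 2 + 1 / d := by
  have d_ne : (d : ℝ) ≠ 0 := Nat.cast_ne_zero.2 (NeZero.ne d)
  have sum_sign (j : Fin d) : ((z + unitStep (j, 1)) i : ℝ) ^ 2 + ((z + unitStep (j, -1)) i) ^ 2 =
      2 * z i ^ 2 + if i = j then 2 else 0 := by
    rcases eq_or_ne i j with rfl | h
    · simp only [unitStep, Pi.add_apply, Pi.single_eq_same, Int.cast_add, Units.val_one,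
        Units.val_neg, Int.cast_one, Int.cast_neg, if_true]
      ring
    · simp [unitStep, h, two_mul]
  rw [stepAvg_apply, div_eq_iff (by positivity)]
  simp only [Fintype.sum_prod_type, UnitsInt.univ, Finset.sum_pair (show (1 : ℤˣ) ≠ -1 by decide),
    sum_sign, Finset.sum_add_distrib, Finset.sum_ite_eq, Finset.mem_univ, if_true,
    Finset.sum_const, Finset.card_univ, Fintype.card_fin, nsmul_eq_mul]
  field_simp

theorem stepAvg_norm_euc_sq (z : Pt d) :
    stepAvg (fun y => ‖euc y‖ ^ 2) z = ‖euc z‖ ^ 2 + 1 := by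
  have d_ne : (d : ℝ) ≠ 0 := Nat.cast_ne_zero.2 (NeZero.ne d)
  have norm_sq_eq : (fun y : Pt d => ‖euc y‖ ^ 2) = ∑ i, fun y => (y i : ℝ) ^ 2 := by
    ext y
    rw [norm_euc_sq, Finset.sum_apply]
  rw [norm_sq_eq, map_sum, Finset.sum_apply]
  simp [stepAvg_coord_sq, Finset.sum_add_distrib, norm_euc_sq, d_ne]

theorem stepAvg_slabBarrier (i : Fin d) (h : ℕ) (u : Pt d) :
    stepAvg (slabBarrier i h) u = slabBarrier i h u := by
  have slabBarrier_eq : slabBarrier i h = (h : ℝ)⁻¹ •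
      ((d : ℝ) • (fun y => (y i : ℝ) ^ 2) - fun y => ‖euc y‖ ^ 2) - fun y => (y i : ℝ) := rfl
  have d_ne : (d : ℝ) ≠ 0 := Nat.cast_ne_zero.2 (NeZero.ne d)
  simp [slabBarrier_eq, stepAvg_coord, stepAvg_coord_sq, stepAvg_norm_euc_sq, mul_add, d_ne]

theorem one_le_slabBarrier_unitStep (i : Fin d) (h : ℕ) :
    1 ≤ slabBarrier i h (unitStep (i, -1)) := by
  have hd : (1 : ℝ) ≤ d := mod_cast NeZero.one_le
  have : 0 ≤ (h : ℝ)⁻¹ * (d - 1) := mul_nonneg (by positivity) (sub_nonneg.2 hd)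
  rw [slabBarrier, norm_euc_unitStep]
  simpa [unitStep] using this

theorem mul_slabBarrier_le_hitProb {κ : ℝ} (hh : 0 < h) (hκ : 0 ≤ κ)
    (hW : ∀ w ∈ W, (w - x) i < 0 → (d + 1) * h < ‖euc (w - x)‖)
    (hU : ∀ y, (y - x) i = -h → ‖euc (y - x)‖ ≤ (d + 1) * h → κ * ((d + 1) * h) ≤ hitProb W T y)
    (hz : -(h : ℤ) ≤ (z - x) i) (hz' : (z - x) i ≤ 0) :
    κ * slabBarrier i h (z - x) ≤ hitProb W T z := by
  set V : Set (Pt d) := {y | -(h : ℤ) < (y - x) i ∧ (y - x) i < 0 ∧ 0 < slabBarrier i h (y - x)}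
  set K : Pt d → ℝ := κ • (fun y => slabBarrier i h (y - x)) - hitProb (W : Set (Pt d)) T
  have hK (y : Pt d) : K y = κ * slabBarrier i h (y - x) - hitProb W T y := rfl
  have off_V : ∀ y : Pt d, -(h : ℤ) ≤ (y - x) i → (y - x) i ≤ 0 → y ∉ V → K y ≤ 0 := by
    intro y hy hy' hyV
    rcases le_or_gt (slabBarrier i h (y - x)) 0 with hle | hpos
    · linarith [hK y, mul_nonpos_of_nonneg_of_nonpos hκ hle, hitProb_nonneg (W : Set (Pt d)) T y]
    · have coord_ne : (y - x) i ≠ 0 := fun h0 =>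
        hpos.not_ge (slabBarrier_nonpos_of_coord_eq_zero h0)
      have coord_eq : (y - x) i = -h := hy.eq_of_not_lt' fun hlt =>
        hyV ⟨hlt, hy'.lt_of_ne coord_ne, hpos⟩
      linarith [hK y, hU y coord_eq (norm_euc_le_of_slabBarrier_pos hh hy hy' hpos),
        mul_le_mul_of_nonneg_left (slabBarrier_le hh hy hy') hκ]
  suffices K z ≤ 0 from sub_nonpos.1 this
  by_cases hzV : z ∈ V
  swap
  · exact off_V z hz hz' hzV
  refine maximum_principle (V := V) (fun ε _ => ?_) (fun y hy => ?_) (fun y hy k hk => ?_) hzV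
  · have escape := (tendsto_norm_euc_cofinite d).comp
      (sub_left_injective (b := x)).tendsto_cofinite
    filter_upwards [escape.eventually_gt_atTop ((d + 1) * h)] with y hfar hy
    exact absurd (norm_euc_le_of_slabBarrier_pos hh hy.1.le hy.2.1.le hy.2.2) (not_le.2 hfar)
  · have hyW : y ∉ W := fun hyW => (hW y hyW hy.2.1).not_ge
      (norm_euc_le_of_slabBarrier_pos hh hy.1.le hy.2.1.le hy.2.2)
    rw [hK, map_sub, map_smul, Pi.sub_apply, Pi.smul_apply, stepAvg_comp_sub, stepAvg_slabBarrier,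
      stepAvg_hitProb_of_notMem _ (Finset.mem_coe.not.2 hyW), smul_eq_mul]
  · have coord_eq : (y + unitStep k - x) i = (y - x) i + unitStep k i := by
      rw [add_sub_right_comm, Pi.add_apply]
    have step_le := abs_le.1 (abs_unitStep_apply_le_one k i)
    refine off_V _ ?_ ?_ hk
    · linarith [Int.add_one_le_of_lt hy.1]
    · linarith [Int.add_one_le_of_lt hy.2.1]

end SlabBarrier

section LexHit

open Filter

variable {d : ℕ}

theorem exists_forall_originHit_le (hd : 3 ≤ d) {ε : ℝ} (hε : 0 < ε) :
    ∃ ρ : ℝ, ∀ z : Pt d, ρ ≤ ‖euc z‖ → originHit z ≤ ε := by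
  obtain ⟨C, -, originHit_le⟩ := exists_originHit_le hd
  have exponent_pos : (0 : ℝ) < d - 2 := by
    have : (3 : ℝ) ≤ d := mod_cast hd
    linarith
  have majorant := (tendsto_rpow_neg_atTop exponent_pos).const_mul C
  rw [mul_zero, neg_sub] at majorant
  obtain ⟨ρ, hρε, hρ⟩ := ((majorant.eventually_lt_const hε).and (eventually_gt_atTop 0)).exists
  exact ⟨ρ, fun z hz => (originHit_le z ρ hρ hz).trans hρε.le⟩

theorem exists_nat_mul_rpow_neg_le {C p : ℝ} (hC : 0 < C) (hp : 0 < p) :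
    ∃ k : ℝ, 0 < k ∧ ∀ n : ℕ, ∃ h : ℕ, 0 < h ∧ n * (C * (h : ℝ) ^ (-p)) ≤ 1 / 2 ∧
      k * (n : ℝ) ^ (-(1 / p)) ≤ (h : ℝ)⁻¹ := by
  set k := (2 * C) ^ (1 / p) + 2
  have k_pos : 0 < k := by positivity
  refine ⟨k⁻¹, inv_pos.2 k_pos, fun n => ?_⟩
  set h := ⌈(2 * C * n) ^ (1 / p)⌉₊ + 1
  have h_pos : (0 : ℝ) < h := Nat.cast_pos.2 (Nat.succ_pos _)
  refine ⟨h, Nat.succ_pos _, ?_, ?_⟩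
  · have le_rpow : 2 * C * n ≤ (h : ℝ) ^ p := by
      rw [← Real.rpow_inv_le_iff_of_pos (by positivity) h_pos.le hp, ← one_div]
      exact (Nat.le_ceil _).trans (Nat.cast_le.2 (Nat.le_succ _))
    rw [Real.rpow_neg h_pos.le, ← mul_assoc, ← div_eq_mul_inv, div_le_iff₀ (by positivity)]
    linarith
  · rcases n.eq_zero_or_pos with rfl | hn
    · rw [Nat.cast_zero, Real.zero_rpow (neg_ne_zero.2 (one_div_pos.2 hp).ne'), mul_zero]
      positivity
    have one_le_rpow : 1 ≤ (n : ℝ) ^ (1 / p) :=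
      Real.one_le_rpow (mod_cast hn) (by positivity)
    have h_le : (h : ℝ) ≤ k * (n : ℝ) ^ (1 / p) := by
      calc (h : ℝ) ≤ (2 * C * n) ^ (1 / p) + 1 + 1 := by
            push_cast [h]
            gcongr
            exact (Nat.ceil_lt_add_one (by positivity)).le
        _ ≤ k * (n : ℝ) ^ (1 / p) := by
          rw [Real.mul_rpow (by positivity) (by positivity), add_mul]
          linarith
    rw [Real.rpow_neg (by positivity), ← mul_inv]
    gcongr

theorem exists_meanHits_le_half (hd : 3 ≤ d) :
    ∃ k : ℝ, 0 < k ∧ ∀ n : ℕ, ∃ h : ℕ, 0 < h ∧ k * (n : ℝ) ^ (-(1 / (d - 2 : ℝ))) ≤ (h : ℝ)⁻¹ ∧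
      ∀ (S : Finset (Pt d)) (z : Pt d), S.card = n → (∀ w ∈ S, h ≤ ‖euc (z - w)‖) →
        meanHits S z ≤ 1 / 2 := by
  obtain ⟨C, hC, originHit_le⟩ := exists_originHit_le hd
  have exponent_pos : (0 : ℝ) < d - 2 := by
    have : (3 : ℝ) ≤ d := mod_cast hd
    linarith
  obtain ⟨k, hk, height⟩ := exists_nat_mul_rpow_neg_le hC exponent_pos
  refine ⟨k, hk, fun n => ?_⟩
  obtain ⟨h, hh, mean_le, le_inv⟩ := height n
  refine ⟨h, hh, le_inv, fun S z hS hfar => ?_⟩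
  rw [neg_sub] at mean_le
  exact (meanHits_le_card_mul fun w hw =>
    originHit_le _ _ (Nat.cast_pos.2 hh) (hfar w hw)).trans (hS ▸ mean_le)

theorem exists_le_hitProb_annulus (hd : 3 ≤ d) :
    ∃ c : ℝ, 0 < c ∧ ∀ n : ℕ, ∃ ρ : ℝ, ∀ (W T : Finset (Pt d)), W.card = n → ∀ b ∈ W,
      (∀ w ∈ W \ T, ρ ≤ ‖euc (w - b)‖) → ∀ (x : Pt d) (D : ℝ), 1 ≤ D →
        (∀ w ∈ W, ‖euc (w - x)‖ ≤ D) → ∀ z : Pt d, 2 * D ≤ ‖euc (z - x)‖ →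
          ‖euc (z - x)‖ ≤ 2 * D + 1 → c * D ^ (2 - d : ℝ) ≤ hitProb W T z := by
  have : NeZero d := ⟨by lia⟩
  obtain ⟨C, hC, originHit_le⟩ := exists_originHit_le hd
  obtain ⟨c, hc, le_originHit⟩ := exists_le_originHit hd
  set c' := c * 4 ^ (2 - d : ℝ) / 2 with hc'
  have c'_pos : 0 < c' := by positivity
  refine ⟨c', c'_pos, fun n => ?_⟩
  obtain ⟨ρ, far_le⟩ := exists_forall_originHit_le hd (ε := c' / ((n + 1) * C)) (by positivity)
  refine ⟨ρ, fun W T hWn b hb hρ x D hD hWD z hz hz' => ?_⟩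
  have dist_ge : ∀ w ∈ W, D ≤ ‖euc (z - w)‖ := fun w hw => by
    linarith [norm_euc_sub_le z w x, hWD w hw]
  have dist_le : ‖euc (z - b)‖ ≤ 4 * D := by
    linarith [norm_euc_sub_le z x b, norm_euc_sub_rev x b, hWD b hb]
  have direct : 2 * c' * D ^ (2 - d : ℝ) ≤ originHit (z - b) := by
    have z_ne_b : z - b ≠ 0 := fun h => by
      have := dist_ge b hb
      rw [h, map_zero, norm_zero] at this
      linarith
    calc 2 * c' * D ^ (2 - d : ℝ) = c * (4 * D) ^ (2 - d : ℝ) := by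
          rw [hc', Real.mul_rpow (by positivity) (by positivity)]
          ring
      _ ≤ originHit (z - b) := le_originHit _ _ z_ne_b dist_le
  have screened : meanHits (W \ T) z ≤ (n + 1) * (C * D ^ (2 - d : ℝ)) := by
    refine (meanHits_le_card_mul fun w hw =>
      originHit_le _ D (by positivity) (dist_ge w (Finset.sdiff_subset hw))).trans ?_
    have card_le : ((W \ T).card : ℝ) ≤ n + 1 := by
      exact_mod_cast (Finset.card_le_card Finset.sdiff_subset).trans (hWn.le.trans n.le_succ)
    gcongr
  have m_nonneg : 0 ≤ c' / ((n + 1) * C) := by positivity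
  have screening_le : c' / ((n + 1) * C) * meanHits (W \ T) z ≤ c' * D ^ (2 - d : ℝ) :=
    (mul_le_mul_of_nonneg_left screened m_nonneg).trans_eq (by field_simp)
  linarith [originHit_sub_le_hitProb hd hb m_nonneg (fun w hw => far_le _ (hρ w hw)) z]

theorem div_le_hitProb_add_unitStep [NeZero d] {W T : Finset (Pt d)} {x : Pt d} {i : Fin d} {h : ℕ}
    {r η : ℝ} (hh : 0 < h) (hη : 0 ≤ η) (hr : (d + 1) * h < r)
    (hmean : ∀ z, (∀ w ∈ W, h ≤ ‖euc (z - w)‖) → meanHits W z ≤ 1 / 2)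
    (hW : ∀ w ∈ W, (w - x) i < 0 → (d + 2) * h ≤ ‖euc (w - x)‖)
    (hU : ∀ y, r ≤ ‖euc (y - x)‖ → ‖euc (y - x)‖ ≤ r + 1 → η ≤ hitProb W T y) :
    η / (2 * ((d + 1) * h)) ≤ hitProb W T (x + unitStep (i, -1)) := by
  have hh' : (0 : ℝ) < h := Nat.cast_pos.2 hh
  set κ := η / (2 * ((d + 1) * h)) with hκ
  have κ_nonneg : 0 ≤ κ := by positivity
  have κ_mul : κ * ((d + 1) * h) = η / 2 := by
    rw [hκ]
    field_simp
  have bottom : ∀ y, (y - x) i = -h → ‖euc (y - x)‖ ≤ (d + 1) * h →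
      κ * ((d + 1) * h) ≤ hitProb W T y := by
    intro y hy hyx
    have far : ∀ w ∈ W, h ≤ ‖euc (y - w)‖ := by
      intro w hw
      rcases lt_or_ge ((w - x) i) 0 with hneg | hnonneg
      · linarith [hW w hw hneg, norm_euc_sub_le w y x, norm_euc_sub_rev w y]
      · have height_le : (h : ℤ) ≤ |(y - w) i| := by
          simp only [Pi.sub_apply] at hy hnonneg ⊢
          exact le_abs.2 (Or.inr (by linarith))
        exact (by exact_mod_cast height_le : (h : ℝ) ≤ |((y - w) i : ℝ)|).trans
          (abs_coord_le_norm_euc _ i)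
    calc κ * ((d + 1) * h) = η * (1 - 1 / 2) := by rw [κ_mul]; ring
      _ ≤ η * (1 - meanHits W y) := by gcongr; exact hmean y far
      _ ≤ hitProb W T y := mul_one_sub_meanHits_le_hitProb hη hU (hyx.trans_lt hr)
  have side : ∀ w ∈ W, (w - x) i < 0 → (d + 1) * h < ‖euc (w - x)‖ := fun w hw hneg => by
    linarith [hW w hw hneg]
  have slab := mul_slabBarrier_le_hitProb (z := x + unitStep (i, -1)) hh κ_nonneg side bottom
    (by simpa [unitStep] using Nat.one_le_iff_ne_zero.2 hh.ne') (by simp [unitStep])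
  rw [add_sub_cancel_left] at slab
  exact (le_mul_of_one_le_right κ_nonneg (one_le_slabBarrier_unitStep i h)).trans slab

theorem exists_le_firstHitIn (hd : 3 ≤ d) :
    ∃ c : ℝ, 0 < c ∧ ∀ n : ℕ, ∃ ρ : ℝ, ∀ (W T : Finset (Pt d)), W.card = n → ∀ b ∈ W,
      (∀ w ∈ W \ T, ρ ≤ ‖euc (w - b)‖) → ∀ x ∈ W \ T, ∀ i : Fin d,
        (∀ w ∈ W, (w - x) i < 0 → ρ ≤ ‖euc (w - x)‖) →
          c * (n : ℝ) ^ (-(1 / (d - 2 : ℝ))) * diam0 d W ^ (2 - d : ℝ) ≤ firstHitIn d W T x := by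
  have : NeZero d := ⟨by lia⟩
  obtain ⟨c, hc, annulus⟩ := exists_le_hitProb_annulus hd
  obtain ⟨k, hk, height⟩ := exists_meanHits_le_half hd
  refine ⟨c * k / (4 * d * (d + 1)), by have := NeZero.pos d; positivity, fun n => ?_⟩
  obtain ⟨ρ, annulus⟩ := annulus n
  obtain ⟨h, hh, le_inv, mean_le⟩ := height n
  refine ⟨max ρ ((d + 2) * h), fun W T hWn b hb hbW x hx i hxW => ?_⟩
  have hh' : (1 : ℝ) ≤ h := Nat.one_le_cast.2 hh
  have hxW' := Finset.sdiff_subset hx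
  set D := diam0 d W
  have D_ge : (d + 2) * h ≤ D := (le_max_right _ _).trans <| (hbW x hx).trans <|
    norm_euc_sub_le_diam0 hxW' hb
  have d_mul_h_nonneg : (0 : ℝ) ≤ d * h := by positivity
  have D_pos : 0 < D := by linarith
  have neighbor := div_le_hitProb_add_unitStep (T := T) (r := 2 * D) (i := i) hh
    (by positivity : 0 ≤ c * D ^ (2 - d : ℝ)) (by linarith) (fun z => mean_le W z hWn)
    (fun w hw hneg => (le_max_right _ _).trans (hxW w hw hneg))
    (annulus W T hWn b hb (fun w hw => (le_max_left _ _).trans (hbW w hw)) x D (by linarith)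
      fun w hw => norm_euc_sub_le_diam0 hw hxW')
  calc c * k / (4 * d * (d + 1)) * (n : ℝ) ^ (-(1 / (d - 2 : ℝ))) * D ^ (2 - d : ℝ)
      = c * D ^ (2 - d : ℝ) / (4 * d * (d + 1)) * (k * (n : ℝ) ^ (-(1 / (d - 2 : ℝ)))) := by ring
    _ ≤ c * D ^ (2 - d : ℝ) / (4 * d * (d + 1)) * (h : ℝ)⁻¹ := by gcongr
    _ = c * D ^ (2 - d : ℝ) / (2 * ((d + 1) * h)) / (2 * d) := by field_simp; norm_num
    _ ≤ hitProb W T (x + unitStep (i, -1)) / (2 * d) := by gcongr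
    _ ≤ stepAvg (hitProb W T) x := div_le_stepAvg (hitProb_nonneg _ _) (i, -1)
    _ = firstHitIn d W T x := (firstHitIn_eq_stepAvg _ _ x).symm

theorem IsLex.apply_zero_le [NeZero d] {A : Finset (Pt d)} {x a : Pt d}
    (hx : IsLex d A x) (ha : a ∈ A) : x 0 ≤ a 0 := by
  rcases eq_or_ne a x with rfl | hax
  · exact le_rfl
  · obtain ⟨i, h_eq, h_lt⟩ := hx.2 a ha hax
    rcases eq_or_ne i 0 with rfl | hi
    · exact h_lt.le
    · exact (h_eq 0 (Fin.pos_iff_ne_zero.2 hi)).le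

theorem lex_hit_general (d : ℕ) (hd : 3 ≤ d) :
    ∃ c : ℝ, 0 < c ∧ ∀ n : ℕ, ∃ ρ : ℝ,
      ∀ A B B1 B2 : Finset (Pt d), (A ∪ B).card = n → ρ ≤ setDist d A B → B = B1 ∪ B2 →
        ρ ≤ setDist d B1 B2 → ∀ x ∈ A, ∀ i : Fin d, (∀ a ∈ A, x i ≤ a i) →
          c * (n : ℝ) ^ (-(1 / (d - 2 : ℝ))) * diam0 d (A ∪ B) ^ ((2 : ℝ) - (d : ℝ)) ≤
            firstHitIn d (↑(A ∪ B)) (↑B1) x / retProb d (↑(A ∪ B)) x := by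
  have : NeZero d := ⟨by lia⟩
  obtain ⟨c, hc, hit⟩ := exists_le_firstHitIn hd
  refine ⟨c, hc, fun n => ?_⟩
  obtain ⟨ρ, hit⟩ := hit n
  refine ⟨max ρ 1, fun A B B1 B2 hn hAB hB hB12 x hx i hxi => ?_⟩
  obtain ⟨b, hb⟩ := nonempty_of_setDist_pos (zero_lt_one.trans_le (le_of_max_le_right hB12))
  have B1_subset : B1 ⊆ B := hB ▸ Finset.subset_union_left
  have dist_A_B : ∀ a ∈ A, ∀ y ∈ B, max ρ 1 ≤ ‖euc (a - y)‖ := fun a ha y hy =>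
    hAB.trans (setDist_le ha hy)
  refine (hit _ B1 hn b (Finset.mem_union_right _ (B1_subset hb)) (fun w hw => ?_) x ?_ i
    fun w hw hneg => ?_).trans (firstHitIn_le_div_retProb _ _ x)
  · obtain ⟨hwAB, hw1⟩ := Finset.mem_sdiff.1 hw
    rcases Finset.mem_union.1 hwAB with hwA | hwB
    · exact le_of_max_le_left (dist_A_B w hwA b (B1_subset hb))
    · have hw2 : w ∈ B2 := (Finset.mem_union.1 (hB ▸ hwB)).resolve_left hw1
      exact norm_euc_sub_rev b w ▸ (le_of_max_le_left hB12).trans (setDist_le hb hw2)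
  · refine Finset.mem_sdiff.2 ⟨Finset.mem_union_left _ hx, fun hx1 => ?_⟩
    have := le_of_max_le_right (dist_A_B x hx x (B1_subset hx1))
    norm_num at this
  · have hwB : w ∈ B := (Finset.mem_union.1 hw).resolve_left fun hwA =>
      hneg.not_ge (sub_nonneg.2 (hxi w hwA))
    exact norm_euc_sub_rev x w ▸ le_of_max_le_left (dist_A_B x hx w hwB)

end LexHit

/-- **Conditional hitting estimate for lex elements.** Let `d ≥ 5`. There are
`ρ = ρ(n,d)` and `c = c(d) > 0` such that if `x` is lex in `A`, `A ∪ B` is an `n`-element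
subset of `ℤ^d` with `dist(A,B) ≥ ρ`, and `B = B¹ ∪ B²` with `|B¹| ≤ 3` and
`dist(B¹,B²) ≥ ρ`, then
`P_x(S_{τ_{A∪B}} ∈ B¹ ∣ τ_{A∪B} < ∞) ≥ c n^{−d/(d−2) − 1.6} diam(A∪B)^{2−d}`. -/
theorem lex_hit (d : ℕ) (hd : 5 ≤ d) :
    ∃ c : ℝ, 0 < c ∧ ∀ n : ℕ, ∃ ρ : ℝ,
      ∀ A B B1 B2 : Finset (Pt d), Disjoint A B → (A ∪ B).card = n →
        ρ ≤ setDist d A B → B = B1 ∪ B2 → Disjoint B1 B2 → B1.card ≤ 3 →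
        ρ ≤ setDist d B1 B2 →
        ∀ x : Pt d, IsLex d A x →
          c * (n : ℝ) ^ (-((d : ℝ) / ((d : ℝ) - 2)) - 1.6) *
              diam0 d (A ∪ B) ^ ((2 : ℝ) - (d : ℝ)) ≤
            firstHitIn d (↑(A ∪ B)) (↑B1) x / retProb d (↑(A ∪ B)) x := by
  have : NeZero d := ⟨by lia⟩
  have hd' : (5 : ℝ) ≤ d := mod_cast hd
  obtain ⟨c, hc, hit⟩ := lex_hit_general d (by lia)
  refine ⟨c, hc, fun n => ?_⟩
  obtain ⟨ρ, hit⟩ := hit n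
  refine ⟨ρ, fun A B B1 B2 _ hn hAB hB _ _ hB12 x hx => ?_⟩
  have exponent_le : -((d : ℝ) / (d - 2)) - 1.6 ≤ -(1 / (d - 2)) := by
    have : 1 / ((d : ℝ) - 2) ≤ d / (d - 2) := by
      gcongr <;> linarith
    linarith
  have hxAB : x ∈ A ∪ B := Finset.mem_union_left B hx.1
  have one_le_n : (1 : ℝ) ≤ n := Nat.one_le_cast.2 (hn ▸ Finset.card_pos.2 ⟨x, hxAB⟩)
  have diam_nonneg : 0 ≤ diam0 d (A ∪ B) :=
    (norm_nonneg _).trans (norm_euc_sub_le_diam0 hxAB hxAB)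
  refine le_trans ?_ (hit A B B1 B2 hn hAB hB hB12 x hx.1 0 fun a => hx.apply_zero_le)
  gcongr

end HATFormal
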